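/- arXiv:1705.07604 — 3 statements merged into one kernel-verified Lean document; each statement's English description precedes it below -/
import Mathlib

section
/- For a Young diagram λ contained in the m×n rectangle with |λ| = p boxes, the ratio (dim S^λ(ℂ^m) · dim S^{λ'}(ℂ^n)) / C(mn, p) equals (f^λ · f^{n^m/λ}) / f^{n^m}, where f^μ denotes the number of standard Young tableaux of shape μ, S^λ denotes the Schur functor, and n^m/λ is the (rotated) complement of λ in the m-row, n-column rectangle. -/
open YoungDiagram Finset

/-- The rectangular Young diagram with `m` rows and `n` columns. -/
def rect (m n : ℕ) : YoungDiagram where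
  cells := Finset.range m ×ˢ Finset.range n
  isLowerSet := by
    rintro ⟨a1, a2⟩ ⟨b1, b2⟩ ⟨h1, h2⟩ hb
    simp only [Finset.coe_product, Set.mem_prod, Finset.mem_coe, Finset.mem_range] at *
    exact ⟨lt_of_le_of_lt h1 hb.1, lt_of_le_of_lt h2 hb.2⟩

/-- The 180°-rotated complement of a Young diagram `μ` inside the rectangle with
`m` rows and `n` columns: its row lengths are `n - μ.rowLen (m-1-i)`. -/
def complement (m n : ℕ) (μ : YoungDiagram) : YoungDiagram where
  cells := (Finset.range m ×ˢ Finset.range n).filter fun p => p.2 < n - μ.rowLen (m - 1 - p.1)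
  isLowerSet := by
    rintro ⟨a1, a2⟩ ⟨b1, b2⟩ ⟨h1, h2⟩ hb
    simp only [Finset.coe_filter, Set.mem_setOf_eq, Finset.mem_product, Finset.mem_range] at *
    refine ⟨⟨lt_of_le_of_lt h1 hb.1.1, lt_of_le_of_lt h2 hb.1.2⟩, ?_⟩
    calc b2 ≤ a2 := h2
      _ < n - μ.rowLen (m - 1 - a1) := hb.2
      _ ≤ n - μ.rowLen (m - 1 - b1) :=
          Nat.sub_le_sub_left (μ.rowLen_anti _ _ (Nat.sub_le_sub_left h1 _)) n

/-- The hook length of the cell `c` in the Young diagram `μ` (arm + leg + 1). -/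
def hookLength (μ : YoungDiagram) (c : ℕ × ℕ) : ℕ :=
  (μ.rowLen c.1 - c.2) + (μ.colLen c.2 - c.1) - 1

/-- The product of all hook lengths of `μ`. -/
def hookProd (μ : YoungDiagram) : ℕ := ∏ c ∈ μ.cells, hookLength μ c

/-- The number of semistandard Young tableaux of shape `μ` with entries in `{0, …, k-1}`;
this equals `s_μ(1^k) = dim S^μ(ℂ^k)`. -/
noncomputable def ssytCount (μ : YoungDiagram) (k : ℕ) : ℕ :=
  Set.ncard {T : SemistandardYoungTableau μ | ∀ i j, (i, j) ∈ μ → T i j < k}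

/-- `T : ℕ × ℕ → ℕ` is a standard Young tableau of shape `μ` (with entries `0, …, |μ|-1`):
it is a bijection from the cells of `μ` to `{0, …, |μ|-1}`, strictly increasing along
rows and columns, and zero outside `μ`. -/
def IsSyt (μ : YoungDiagram) (T : ℕ × ℕ → ℕ) : Prop :=
  Set.BijOn T (μ.cells : Set (ℕ × ℕ)) (Finset.range μ.card : Set ℕ) ∧
  (∀ i j, (i, j + 1) ∈ μ → T (i, j) < T (i, j + 1)) ∧
  (∀ i j, (i + 1, j) ∈ μ → T (i, j) < T (i + 1, j)) ∧
  (∀ c, c ∉ μ → T c = 0)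

/-- The number of standard Young tableaux of shape `μ`, i.e. `f^μ`. -/
noncomputable def sytCount (μ : YoungDiagram) : ℕ := Set.ncard {T | IsSyt μ T}

/-- The Vandermonde determinant. -/
noncomputable def vdet {m : ℕ} (v : Fin m → ℚ) : ℚ := (Matrix.vandermonde v).det

lemma vdet_eq {m : ℕ} (v : Fin m → ℚ) :
    vdet v = (Matrix.of fun i j : Fin m => (descPochhammer ℚ (j : ℕ)).eval (v i)).det :=
  Matrix.det_eval_matrixOfPolynomials_eq_det_vandermonde v _
    (fun i => descPochhammer_natDegree ℚ i) (fun i => monic_descPochhammer ℚ i)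

lemma vdet_eq_zero {m : ℕ} (v : Fin m → ℚ) (a b : Fin m) (hab : a ≠ b) (h : v a = v b) :
    vdet v = 0 :=
  Matrix.det_vandermonde_eq_zero_iff.2 ⟨a, b, h, hab⟩

lemma vdet_id (m : ℕ) : vdet (fun i : Fin m => ((i : ℕ) : ℚ)) = ∏ i ∈ range m, (i.factorial : ℚ) := by
  cases m with
  | zero => simp [vdet]
  | succ k =>
    have := Matrix.det_vandermonde_id_eq_superFactorial (R := ℚ) k
    rw [vdet, this, ← Nat.prod_range_succ_factorial]
    push_cast
    rfl

lemma dp_succ_left (x : ℚ) (j : ℕ) :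
    (descPochhammer ℚ (j + 1)).eval x = x * (descPochhammer ℚ j).eval (x - 1) := by
  rw [descPochhammer_succ_left]; simp [Polynomial.eval_comp]

lemma dp_diff (x : ℚ) (j : ℕ) :
    (descPochhammer ℚ (j + 1)).eval (x + 1) - (descPochhammer ℚ (j + 1)).eval x
      = (j + 1) * (descPochhammer ℚ j).eval x := by
  rw [dp_succ_left, descPochhammer_succ_eval]; simp; ring

lemma dp_sum (p q a j : ℕ) (h : p ≤ q + 1) :
    ((j : ℚ) + 1) * ∑ x ∈ Icc p q, (descPochhammer ℚ j).eval ((x : ℚ) + a)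
      = (descPochhammer ℚ (j + 1)).eval ((q : ℚ) + (a + 1 : ℕ))
        - (descPochhammer ℚ (j + 1)).eval ((p : ℚ) + a) := by
  rw [← Finset.Ico_add_one_right_eq_Icc, Finset.mul_sum]
  have : ∀ x ∈ Ico p (q + 1), ((j : ℚ) + 1) * (descPochhammer ℚ j).eval ((x : ℚ) + a) =
      (fun y : ℕ => (descPochhammer ℚ (j + 1)).eval ((y : ℚ) + a)) (x + 1) -
      (fun y : ℕ => (descPochhammer ℚ (j + 1)).eval ((y : ℚ) + a)) x := by
    intro x _
    rw [← dp_diff]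
    simp only
    congr 2
    push_cast
    ring
  rw [Finset.sum_congr rfl this, Finset.sum_Ico_sub (fun y : ℕ => (descPochhammer ℚ (j + 1)).eval ((y : ℚ) + a)) h]
  congr 2
  push_cast
  ring

lemma sum_det_scale {m : ℕ} (M : Matrix (Fin m) (Fin m) ℚ) (d : Fin m → ℚ) :
    ∑ a, (M.updateRow a (fun j => d j * M a j)).det = (∑ j, d j) * M.det := by
  simp_rw [Matrix.det_apply', Finset.mul_sum]
  rw [Finset.sum_comm]
  refine Finset.sum_congr rfl fun σ _ => ?_
  -- entries are indexed as `M (σ i) i`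
  have : ∀ a, ∏ i, (M.updateRow a (fun j => d j * M a j)) (σ i) i
      = d (σ.symm a) * ∏ i, M (σ i) i := by
    intro a
    rw [← Finset.mul_prod_erase _ _ (Finset.mem_univ (σ.symm a)),
      ← Finset.mul_prod_erase univ (fun i => M (σ i) i) (Finset.mem_univ (σ.symm a))]
    rw [← mul_assoc]
    congr 1
    · simp
    · refine Finset.prod_congr rfl fun i hi => ?_
      rw [Matrix.updateRow_ne]
      intro h
      exact (Finset.ne_of_mem_erase hi) (by simp [← h])
  simp_rw [this]
  rw [← Equiv.sum_comp σ.symm d, Finset.sum_mul]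
  refine Finset.sum_congr rfl fun a _ => ?_
  ring

lemma vdet_remove {m : ℕ} (v : Fin m → ℚ) :
    ∑ a, v a * vdet (Function.update v a (v a - 1)) = (∑ a, v a - ∑ a : Fin m, ((a : ℕ) : ℚ)) * vdet v := by
  set M : Matrix (Fin m) (Fin m) ℚ :=
    Matrix.of fun i j : Fin m => (descPochhammer ℚ (j : ℕ)).eval (v i) with hM
  have key : ∀ a, v a * vdet (Function.update v a (v a - 1)) =
      v a * M.det - (M.updateRow a (fun j : Fin m => ((j : ℕ) : ℚ) * M a j)).det := by
    intro a
    rw [vdet_eq]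
    have h1 : (Matrix.of fun i j : Fin m => (descPochhammer ℚ (j : ℕ)).eval
        (Function.update v a (v a - 1) i)) =
        M.updateRow a (fun j => (descPochhammer ℚ (j : ℕ)).eval (v a - 1)) := by
      ext i j
      by_cases h : i = a
      · subst h; simp
      · simp [h, hM, Matrix.updateRow_ne]
    rw [h1, ← Matrix.det_updateRow_smul]
    have h2 : (v a • fun j : Fin m => (descPochhammer ℚ (j : ℕ)).eval (v a - 1)) =
        v a • M a + (-1 : ℚ) • (fun j : Fin m => ((j : ℕ) : ℚ) * M a j) := by
      ext j
      simp only [Pi.smul_apply, smul_eq_mul, Pi.add_apply, ← dp_succ_left,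
        descPochhammer_succ_eval, hM, Matrix.of_apply]
      ring
    rw [h2, Matrix.det_updateRow_add, Matrix.det_updateRow_smul, Matrix.det_updateRow_smul,
      Matrix.updateRow_eq_self]
    ring
  rw [Finset.sum_congr rfl fun a _ => key a, Finset.sum_sub_distrib, sum_det_scale,
    ← Finset.sum_mul, ← sub_mul, vdet_eq]

lemma vdet_branch {k : ℕ} (L : Fin (k + 1) → ℕ) (hL : ∀ a : Fin k, L a.castSucc ≤ L a.succ) :
    (k.factorial : ℚ) * ∑ ρ ∈ Fintype.piFinset (fun a : Fin k => Icc (L a.castSucc) (L a.succ)),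
      vdet (fun a : Fin k => (ρ a : ℚ) + (a : ℕ)) = vdet (fun a => (L a : ℚ) + (a : ℕ)) := by
  simp_rw [vdet_eq]
  have h1 := (Matrix.detRowAlternating (R := ℚ) (n := Fin k)).toMultilinearMap.map_sum_finset
    (fun (a : Fin k) (x : ℕ) => fun j : Fin k => (descPochhammer ℚ (j : ℕ)).eval ((x : ℚ) + (a : ℕ)))
    (fun a : Fin k => Icc (L a.castSucc) (L a.succ))
  have h1' : ∑ ρ ∈ Fintype.piFinset (fun a : Fin k => Icc (L a.castSucc) (L a.succ)),
      (Matrix.of fun i j : Fin k => (descPochhammer ℚ (j : ℕ)).eval ((ρ i : ℚ) + (i : ℕ))).det =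
      (Matrix.of fun i j : Fin k => ∑ x ∈ Icc (L i.castSucc) (L i.succ),
        (descPochhammer ℚ (j : ℕ)).eval ((x : ℚ) + (i : ℕ))).det := by
    refine h1.symm.trans ?_
    change Matrix.det _ = _
    congr 1
    ext i j
    simp [Finset.sum_apply]
  rw [h1']
  have hf : (k.factorial : ℚ) = ∏ j : Fin k, (((j : ℕ) : ℚ) + 1) := by
    rw [← Finset.prod_range_add_one_eq_factorial, Finset.prod_range]
    push_cast
    rfl
  rw [hf, ← Matrix.det_mul_row]
  set V : Matrix (Fin (k + 1)) (Fin (k + 1)) ℚ := Matrix.of fun i j : Fin (k + 1) =>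
    (descPochhammer ℚ (j : ℕ)).eval ((L i : ℚ) + (i : ℕ)) with hV
  let B : Matrix (Fin (k + 1)) (Fin (k + 1)) ℚ := Matrix.of
    (Fin.cons (V 0) (fun i : Fin k => fun j => V i.succ j - V i.castSucc j))
  have hB : V.det = B.det := by
    apply Matrix.det_eq_of_forall_row_eq_smul_add_pred (fun _ => 1)
    · intro j; simp [B]
    · intro i j; simp [B]
  rw [hB, Matrix.det_succ_column_zero, Fin.sum_univ_succ]
  have hz : ∀ i : Fin k, B i.succ 0 = 0 := by
    intro i; simp [B, hV]
  have h0 : B 0 0 = 1 := by simp [B, hV]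
  simp only [hz, h0]
  simp only [mul_zero, zero_mul, Finset.sum_const_zero, add_zero, Fin.val_zero, pow_zero, one_mul]
  congr 1
  ext i j
  simp only [Matrix.of_apply, Matrix.submatrix_apply, Fin.succAbove_zero, B, Fin.cons_succ, hV,
    Fin.val_succ, Fin.val_castSucc]
  exact dp_sum _ _ _ _ (by have := hL i; omega)

/-- The sub-diagram of cells all of whose predecessors satisfy `P`. -/
noncomputable def subD (μ : YoungDiagram) (P : ℕ × ℕ → Prop) : YoungDiagram where
  cells := by
    classical exact μ.cells.filter (fun c => ∀ d ≤ c, P d)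
  isLowerSet := by
    intro a b hab ha
    simp only [Finset.coe_filter, Set.mem_ofPred_eq, YoungDiagram.mem_cells] at *
    exact ⟨μ.isLowerSet hab ha.1, fun d hd => ha.2 d (hd.trans hab)⟩

lemma mem_subD {μ : YoungDiagram} {P : ℕ × ℕ → Prop} {c : ℕ × ℕ} :
    c ∈ subD μ P ↔ c ∈ μ ∧ ∀ d ≤ c, P d := by
  rw [← YoungDiagram.mem_cells, subD]
  simp

/-- The sub-diagram with prescribed row lengths. -/
noncomputable def cut (μ : YoungDiagram) (r : ℕ → ℕ) : YoungDiagram := subD μ (fun c => c.2 < r c.1)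

lemma mem_cut {μ : YoungDiagram} {r : ℕ → ℕ} (hr : Antitone r) (hle : ∀ i, r i ≤ μ.rowLen i)
    {i j : ℕ} : (i, j) ∈ cut μ r ↔ j < r i := by
  rw [cut, mem_subD]
  constructor
  · rintro ⟨_, h⟩; exact h (i, j) le_rfl
  · intro h
    refine ⟨YoungDiagram.mem_iff_lt_rowLen.2 (h.trans_le (hle i)), ?_⟩
    rintro ⟨i', j'⟩ ⟨h1, h2⟩
    exact lt_of_le_of_lt h2 (h.trans_le (hr h1))

lemma rowLen_eq_of {μ : YoungDiagram} {i r : ℕ} (h : ∀ j, (i, j) ∈ μ ↔ j < r) : μ.rowLen i = r := by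
  apply eq_of_forall_lt_iff
  intro j
  rw [← h, YoungDiagram.mem_iff_lt_rowLen]

lemma rowLen_cut {μ : YoungDiagram} {r : ℕ → ℕ} (hr : Antitone r) (hle : ∀ i, r i ≤ μ.rowLen i)
    (i : ℕ) : (cut μ r).rowLen i = r i :=
  rowLen_eq_of fun _ => mem_cut hr hle

/-- Semistandardness for plain functions. -/
def IsSS (μ : YoungDiagram) (k : ℕ) (f : ℕ → ℕ → ℕ) : Prop :=
  (∀ i j1 j2, j1 < j2 → (i, j2) ∈ μ → f i j1 ≤ f i j2) ∧
  (∀ i1 i2 j, i1 < i2 → (i2, j) ∈ μ → f i1 j < f i2 j) ∧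
  (∀ i j, (i, j) ∉ μ → f i j = 0) ∧
  (∀ i j, (i, j) ∈ μ → f i j < k)

lemma ssytCount_eq (μ : YoungDiagram) (k : ℕ) : ssytCount μ k = Set.ncard {f | IsSS μ k f} := by
  rw [ssytCount, ← Set.ncard_image_of_injective (f := SemistandardYoungTableau.entry)]
  · congr 1
    ext f
    constructor
    · rintro ⟨T, hT, rfl⟩
      exact ⟨fun i j1 j2 => T.row_weak', fun i1 i2 j => T.col_strict', fun i j => T.zeros', hT⟩
    · rintro ⟨h1, h2, h3, h4⟩
      exact ⟨⟨f, fun {i j1 j2} => h1 i j1 j2, fun {i1 i2 j} => h2 i1 i2 j,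
        fun {i j} => h3 i j⟩, h4, rfl⟩
  · rintro ⟨f, _, _, _⟩ ⟨g, _, _, _⟩ h
    cases h
    rfl

lemma IsSS.mono {μ : YoungDiagram} {k : ℕ} {f : ℕ → ℕ → ℕ} (h : IsSS μ k f) {i j i' j' : ℕ}
    (hi : i' ≤ i) (hj : j' ≤ j) (hm : (i, j) ∈ μ) : f i' j' ≤ f i j := by
  have h1 : f i j' ≤ f i j := by
    rcases hj.lt_or_eq with hj | rfl
    · exact h.1 _ _ _ hj hm
    · exact le_rfl
  have h2 : f i' j' ≤ f i j' := by
    rcases hi.lt_or_eq with hi | rfl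
    · exact (h.2.1 _ _ _ hi (μ.up_left_mem le_rfl hj hm)).le
    · exact le_rfl
  exact h2.trans h1

lemma IsSS.row_le {μ : YoungDiagram} {k : ℕ} {f : ℕ → ℕ → ℕ} (h : IsSS μ k f) (i j : ℕ)
    (hm : (i, j) ∈ μ) : i ≤ f i j := by
  induction i with
  | zero => exact Nat.zero_le _
  | succ i ih =>
    have := ih (μ.up_left_mem (Nat.le_succ i) le_rfl hm)
    have := h.2.1 i (i + 1) j (Nat.lt_succ_self i) hm
    omega

lemma finite_isSS (μ : YoungDiagram) (k : ℕ) : {f | IsSS μ k f}.Finite := by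
  refine Set.Finite.of_injOn (f := fun f (c : μ.cells) => f c.1.1 c.1.2)
    (t := Set.pi Set.univ (fun _ => Set.Iio k)) ?_ ?_ (Set.Finite.pi fun _ => Set.finite_Iio k)
  · intro f hf c _
    exact hf.2.2.2 _ _ c.2
  · intro f hf g hg h
    ext i j
    by_cases hm : (i, j) ∈ μ
    · exact congrFun h ⟨(i, j), hm⟩
    · rw [hf.2.2.1 i j hm, hg.2.2.1 i j hm]

open Classical in
lemma ss_fiber (μ ν : YoungDiagram) (k : ℕ) (hle : ν ≤ μ)
    (hstrip : ∀ i j, (i + 1, j) ∈ μ → (i, j) ∈ ν) :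
    Set.ncard {f | IsSS μ (k + 1) f ∧ ∀ i j, (i, j) ∈ μ → (f i j < k ↔ (i, j) ∈ ν)}
      = Set.ncard {f | IsSS ν k f} := by
  rw [← Nat.card_coe_set_eq, ← Nat.card_coe_set_eq]
  refine Nat.card_congr ⟨fun f => ⟨fun i j => if (i, j) ∈ ν then f.1 i j else 0, ?_⟩,
    fun f => ⟨fun i j => if (i, j) ∈ ν then f.1 i j else if (i, j) ∈ μ then k else 0, ?_⟩, ?_, ?_⟩
  · obtain ⟨f, ⟨h1, h2, h3, h4⟩, h5⟩ := f
    refine ⟨?_, ?_, ?_, ?_⟩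
    · intro i j1 j2 hj hm
      have := ν.up_left_mem le_rfl hj.le hm
      simp only [hm, this, if_true]
      exact h1 _ _ _ hj (hle hm)
    · intro i1 i2 j hi hm
      have := ν.up_left_mem hi.le le_rfl hm
      simp only [hm, this, if_true]
      exact h2 _ _ _ hi (hle hm)
    · intro i j hm
      simp [hm]
    · intro i j hm
      simp only [hm, if_true]
      exact (h5 i j (hle hm)).2 hm
  · obtain ⟨f, ⟨h1, h2, h3, h4⟩⟩ := f
    refine ⟨⟨?_, ?_, ?_, ?_⟩, ?_⟩
    · intro i j1 j2 hj hm
      have hm1 := μ.up_left_mem le_rfl hj.le hm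
      by_cases hn : (i, j2) ∈ ν
      · have := ν.up_left_mem le_rfl hj.le hn
        simp only [hn, this, if_true]
        exact h1 _ _ _ hj hn
      · by_cases hn1 : (i, j1) ∈ ν
        · simp only [hn, hn1, hm, if_true, if_false]
          exact (h4 _ _ hn1).le
        · simp only [hn, hn1, hm, hm1, if_true, if_false]
          exact le_rfl
    · intro i1 i2 j hi hm
      have hn1 : (i1, j) ∈ ν := hstrip _ _ (μ.up_left_mem hi le_rfl hm)
      by_cases hn : (i2, j) ∈ ν
      · simp only [hn, hn1, if_true]
        exact h2 _ _ _ hi hn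
      · simp only [hn, hn1, hm, if_true, if_false]
        exact h4 _ _ hn1
    · intro i j hm
      have hn : (i, j) ∉ ν := fun h => hm (hle h)
      simp only [hn, hm, if_false]
    · intro i j hm
      by_cases hn : (i, j) ∈ ν
      · simp only [hn, if_true]
        exact (h4 _ _ hn).trans (Nat.lt_succ_self k)
      · simp only [hn, hm, if_true, if_false]
        exact Nat.lt_succ_self k
    · intro i j hm
      by_cases hn : (i, j) ∈ ν
      · simp only [hn, if_true, iff_true]
        exact h4 _ _ hn
      · simp [hn, hm]
  · rintro ⟨f, ⟨h1, h2, h3, h4⟩, h5⟩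
    apply Subtype.ext
    funext i j
    by_cases hn : (i, j) ∈ ν
    · simp [hn]
    · by_cases hm : (i, j) ∈ μ
      · have a1 := h4 i j hm
        have a2 := h5 i j hm
        simp only [hn, hm, if_true, if_false]
        simp only [hn, iff_false] at a2
        omega
      · simp [hn, hm, h3 i j hm]
  · rintro ⟨f, ⟨h1, h2, h3, h4⟩⟩
    apply Subtype.ext
    funext i j
    by_cases hn : (i, j) ∈ ν
    · simp [hn]
    · simp [hn, h3 i j hn]

/-- Row lengths read from a tuple in reverse order. -/
def rowExt (k : ℕ) (ρ : Fin k → ℕ) (r : ℕ) : ℕ := if h : r < k then ρ ⟨k - 1 - r, by omega⟩ else 0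

/-- Row lengths in reverse order. -/
def revLen (μ : YoungDiagram) (m : ℕ) (a : Fin m) : ℕ := μ.rowLen (m - 1 - a)

lemma ss_rec (μ : YoungDiagram) (k : ℕ) (hR : μ.rowLen (k + 1) = 0) :
    ssytCount μ (k + 1) = ∑ ρ ∈ Fintype.piFinset (fun a : Fin k =>
      Icc (revLen μ (k + 1) a.castSucc) (revLen μ (k + 1) a.succ)), ssytCount (cut μ (rowExt k ρ)) k := by
  classical
  have hU : ∀ ρ, ρ ∈ Fintype.piFinset (fun a : Fin k =>
      Icc (revLen μ (k + 1) a.castSucc) (revLen μ (k + 1) a.succ)) ↔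
      ∀ r, r < k → μ.rowLen (r + 1) ≤ rowExt k ρ r ∧ rowExt k ρ r ≤ μ.rowLen r := by
    intro ρ
    simp only [Fintype.mem_piFinset, Finset.mem_Icc, revLen, rowExt]
    constructor
    · intro h r hr
      have := h ⟨k - 1 - r, by omega⟩
      simp only [Fin.val_castSucc, Fin.val_succ] at this
      rw [dif_pos hr]
      convert this using 3 <;> congr 1 <;> omega
    · intro h a
      have := h (k - 1 - a) (by omega)
      rw [dif_pos (by omega)] at this
      simp only [Fin.val_castSucc, Fin.val_succ]
      have e : (⟨k - 1 - (k - 1 - a), by omega⟩ : Fin k) = a := by ext; simp; omega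
      rw [e] at this
      have e1 : k + 1 - 1 - (a : ℕ) = k - 1 - a + 1 := by omega
      have e2 : k + 1 - 1 - ((a : ℕ) + 1) = k - 1 - a := by omega
      rw [e1, e2]
      exact this
  have hprop : ∀ ρ, ρ ∈ Fintype.piFinset (fun a : Fin k =>
      Icc (revLen μ (k + 1) a.castSucc) (revLen μ (k + 1) a.succ)) →
      Antitone (rowExt k ρ) ∧ ∀ i, rowExt k ρ i ≤ μ.rowLen i := by
    intro ρ hρ
    rw [hU] at hρ
    have h2 : ∀ i, rowExt k ρ i ≤ μ.rowLen i := by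
      intro i
      by_cases hi : i < k
      · exact (hρ i hi).2
      · simp [rowExt, hi]
    refine ⟨antitone_nat_of_succ_le fun i => ?_, h2⟩
    by_cases hi : i < k
    · exact (h2 (i + 1)).trans (hρ i hi).1
    · simp [rowExt, show ¬ (i + 1 < k) by omega]
  let sh : (ℕ → ℕ → ℕ) → YoungDiagram := fun f => subD μ (fun c => f c.1 c.2 < k)
  have hsh : ∀ f, IsSS μ (k + 1) f → ∀ i j, (i, j) ∈ sh f ↔ (i, j) ∈ μ ∧ f i j < k := by
    intro f hf i j
    simp only [sh, mem_subD]
    refine and_congr_right fun hm => ⟨fun h => h (i, j) le_rfl, fun h => ?_⟩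
    rintro ⟨i', j'⟩ ⟨h1, h2⟩
    exact (hf.mono h1 h2 hm).trans_lt h
  have hge : ∀ f, IsSS μ (k + 1) f → ∀ i, k ≤ i → ∀ j, (i, j) ∉ sh f := by
    intro f hf i hi j h
    rw [hsh f hf] at h
    have := hf.row_le i j h.1
    omega
  let g : (ℕ → ℕ → ℕ) → (Fin k → ℕ) := fun f => revLen (sh f) k
  have hg : ∀ f, IsSS μ (k + 1) f → ∀ r, rowExt k (g f) r = (sh f).rowLen r := by
    intro f hf r
    by_cases hr : r < k
    · simp only [rowExt, hr, dif_pos, g, revLen]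
      congr 1
      omega
    · simp only [rowExt, hr, dif_neg, not_false_eq_true]
      refine (rowLen_eq_of fun j => ?_).symm
      simp [hge f hf r (by omega) j]
  set S := (finite_isSS μ (k + 1)).toFinset with hS
  have hSm : ∀ f, f ∈ S ↔ IsSS μ (k + 1) f := by intro f; simp [hS]
  have hmaps : Set.MapsTo g (S : Set (ℕ → ℕ → ℕ)) (Fintype.piFinset (fun a : Fin k =>
      Icc (revLen μ (k + 1) a.castSucc) (revLen μ (k + 1) a.succ)) : Finset (Fin k → ℕ)) := by
    intro f hf
    rw [Finset.mem_coe, hSm] at hf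
    rw [Finset.mem_coe, hU]
    intro r hr
    rw [hg f hf]
    constructor
    · apply le_of_forall_lt
      intro j hj
      rw [← YoungDiagram.mem_iff_lt_rowLen] at hj ⊢
      rw [hsh f hf]
      refine ⟨μ.up_left_mem (Nat.le_succ r) le_rfl hj, ?_⟩
      have := hf.2.1 r (r + 1) j (Nat.lt_succ_self r) hj
      have := hf.2.2.2 _ _ hj
      omega
    · apply le_of_forall_lt
      intro j hj
      rw [← YoungDiagram.mem_iff_lt_rowLen] at hj ⊢
      rw [hsh f hf] at hj
      exact hj.1
  rw [ssytCount_eq, Set.ncard_eq_toFinset_card _ (finite_isSS μ (k + 1)), ← hS,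
    Finset.card_eq_sum_card_fiberwise hmaps]
  refine Finset.sum_congr rfl fun ρ hρ => ?_
  obtain ⟨hanti, hle⟩ := hprop ρ hρ
  rw [ssytCount_eq, ← ss_fiber μ (cut μ (rowExt k ρ)) k]
  · rw [← Set.ncard_coe_finset]
    congr 1
    ext f
    simp only [Finset.coe_filter, Set.mem_ofPred_eq, hSm]
    refine and_congr_right fun hf => ?_
    have e : g f = ρ ↔ ∀ r, r < k → rowExt k (g f) r = rowExt k ρ r := by
      constructor
      · rintro rfl r _; rfl
      · intro h
        funext a
        have := h (k - 1 - a) (by omega)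
        simp only [rowExt, show k - 1 - (a : ℕ) < k by omega, dif_pos] at this
        have e : (⟨k - 1 - (k - 1 - a), by omega⟩ : Fin k) = a := by ext; simp; omega
        rwa [e] at this
    rw [e]
    constructor
    · intro h i j hm
      rw [mem_cut hanti hle]
      have hh : rowExt k (g f) i = rowExt k ρ i := by
        by_cases hi : i < k
        · exact h i hi
        · simp [rowExt, hi]
      rw [← hh, hg f hf, ← YoungDiagram.mem_iff_lt_rowLen, hsh f hf]
      simp [hm]
    · intro h r hr
      rw [hg f hf]
      refine rowLen_eq_of fun j => ?_
      rw [hsh f hf, ← mem_cut hanti hle]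
      constructor
      · rintro ⟨h1, h2⟩; exact (h r j h1).1 h2
      · intro h1
        have hm : (r, j) ∈ μ := (mem_subD.1 h1).1
        exact ⟨hm, (h r j hm).2 h1⟩
  · intro c hc
    exact (mem_subD.1 hc).1
  · intro i j hm
    rw [mem_cut hanti hle]
    have hi : i < k := by
      by_contra hi
      have h1 := YoungDiagram.mem_iff_lt_rowLen.1 hm
      have := μ.rowLen_anti (k + 1) (i + 1) (by omega)
      omega
    exact lt_of_lt_of_le (YoungDiagram.mem_iff_lt_rowLen.1 hm) (((hU ρ).1 hρ i hi).1)

/-- The shifted row lengths. -/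
def shv (μ : YoungDiagram) (m : ℕ) (a : Fin m) : ℚ := (revLen μ m a : ℚ) + ((a : ℕ) : ℚ)

lemma eq_bot_of_rowLen {μ : YoungDiagram} (h : μ.rowLen 0 = 0) : μ = ⊥ := by
  apply SetLike.ext
  rintro ⟨i, j⟩
  have := μ.rowLen_anti 0 i (Nat.zero_le i)
  have h2 : (i, j) ∉ μ := by rw [YoungDiagram.mem_iff_lt_rowLen]; omega
  simp [h2]

lemma ssyt_formula (k : ℕ) : ∀ μ : YoungDiagram, μ.rowLen k = 0 →
    (ssytCount μ k : ℚ) * ∏ i ∈ range k, (i.factorial : ℚ) = vdet (shv μ k) := by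
  induction k with
  | zero =>
    intro μ h
    have : ssytCount μ 0 = 1 := by
      rw [eq_bot_of_rowLen h, ssytCount_eq]
      rw [Set.ncard_eq_one]
      refine ⟨fun _ _ => 0, ?_⟩
      ext f
      simp only [IsSS, YoungDiagram.notMem_bot, Set.mem_ofPred_eq, Set.mem_singleton_iff]
      constructor
      · rintro ⟨_, _, h, _⟩
        funext i j
        exact h i j not_false
      · rintro rfl
        simp
    rw [this]
    simp [vdet]
  | succ k ih =>
    intro μ h
    have hb := vdet_branch (revLen μ (k + 1)) (fun a => by
      simp only [revLen, Fin.val_castSucc, Fin.val_succ]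
      exact μ.rowLen_anti _ _ (by omega))
    unfold shv
    rw [← hb, ss_rec μ k h, Finset.prod_range_succ]
    push_cast
    rw [mul_comm (∏ x ∈ range k, (x.factorial : ℚ)), Finset.sum_mul, Finset.mul_sum]
    refine Finset.sum_congr rfl fun ρ hρ => ?_
    have hU : ∀ r, r < k → μ.rowLen (r + 1) ≤ rowExt k ρ r ∧ rowExt k ρ r ≤ μ.rowLen r := by
      simp only [Fintype.mem_piFinset, Finset.mem_Icc, revLen] at hρ
      intro r hr
      simp only [rowExt]
      have := hρ ⟨k - 1 - r, by omega⟩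
      simp only [Fin.val_castSucc, Fin.val_succ] at this
      rw [dif_pos hr]
      convert this using 3 <;> congr 1 <;> omega
    have h2 : ∀ i, rowExt k ρ i ≤ μ.rowLen i := by
      intro i
      by_cases hi : i < k
      · exact (hU i hi).2
      · simp [rowExt, hi]
    have hanti : Antitone (rowExt k ρ) := by
      refine antitone_nat_of_succ_le fun i => ?_
      by_cases hi : i < k
      · exact (h2 (i + 1)).trans (hU i hi).1
      · simp [rowExt, show ¬ (i + 1 < k) by omega]
    have := ih (cut μ (rowExt k ρ)) (by rw [rowLen_cut hanti h2]; simp [rowExt])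
    have e : shv (cut μ (rowExt k ρ)) k = fun a : Fin k => (ρ a : ℚ) + (a : ℕ) := by
      funext a
      simp only [shv, revLen, rowLen_cut hanti h2]
      simp only [rowExt, show k - 1 - (a : ℕ) < k by omega, dif_pos]
      have e : (⟨k - 1 - (k - 1 - a), by omega⟩ : Fin k) = a := by ext; simp; omega
      rw [e]
    rw [e] at this
    rw [← this]
    ring

lemma finite_isSyt (μ : YoungDiagram) : {T | IsSyt μ T}.Finite := by
  refine Set.Finite.of_injOn (f := fun f (c : μ.cells) => f c.1)
    (t := Set.pi Set.univ (fun _ => Set.Iio μ.card)) ?_ ?_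
    (Set.Finite.pi fun _ => Set.finite_Iio μ.card)
  · intro f hf c _
    simpa using hf.1.mapsTo c.2
  · intro f hf g hg h
    ext c
    by_cases hm : c ∈ μ
    · exact congrFun h ⟨c, hm⟩
    · rw [hf.2.2.2 c hm, hg.2.2.2 c hm]

lemma syt_fiber (μ ν : YoungDiagram) (c : ℕ × ℕ) (p : ℕ) (hc : c ∈ μ) (hp : μ.card = p + 1)
    (hν : ∀ d, d ∈ ν ↔ d ∈ μ ∧ d ≠ c) :
    ν.card = p ∧ Set.ncard {T | IsSyt μ T ∧ T c = p} = sytCount ν := by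
  have hcard : ν.card = p := by
    have : ν.cells = μ.cells.erase c := by
      ext d
      rw [Finset.mem_erase, YoungDiagram.mem_cells, YoungDiagram.mem_cells, hν, and_comm]
    rw [YoungDiagram.card, this, Finset.card_erase_of_mem hc]
    change μ.card - 1 = p
    omega
  refine ⟨hcard, ?_⟩
  have hcν : c ∉ ν := fun h => ((hν c).1 h).2 rfl
  rw [sytCount, ← Nat.card_coe_set_eq, ← Nat.card_coe_set_eq]
  refine Nat.card_congr ⟨fun T => ⟨Function.update T.1 c 0, ?_⟩,
    fun T => ⟨Function.update T.1 c p, ?_⟩, ?_, ?_⟩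
  · obtain ⟨T, ⟨hb, h1, h2, h3⟩, h4⟩ := T
    have hne : ∀ d, d ∈ ν → Function.update T c 0 d = T d := fun d hd =>
      Function.update_of_ne (((hν d).1 hd).2) _ _
    refine ⟨⟨?_, ?_, ?_⟩, ?_, ?_, ?_⟩
    · intro d hd
      have hd' := (hν d).1 hd
      have a1 := hb.mapsTo hd'.1
      simp only [hne d hd]
      simp only [Finset.coe_range, Set.mem_Iio, hp, hcard] at a1 ⊢
      have : T d ≠ p := fun h => hd'.2 (hb.injOn hd'.1 hc (h.trans h4.symm))
      omega
    · intro d hd e he hde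
      have hde : Function.update T c 0 d = Function.update T c 0 e := hde
      rw [hne d hd, hne e he] at hde
      exact hb.injOn ((hν d).1 hd).1 ((hν e).1 he).1 hde
    · intro x hx
      simp only [Finset.coe_range, Set.mem_Iio, hcard] at hx
      obtain ⟨d, hd, rfl⟩ := hb.surjOn (show x ∈ ((Finset.range μ.card : Finset ℕ) : Set ℕ) by
        simp [hp]; omega)
      have hdν : d ∈ ν := (hν d).2 ⟨hd, by rintro rfl; omega⟩
      exact ⟨d, hdν, hne d hdν⟩
    · intro i j hm
      rw [hne _ hm, hne _ (ν.up_left_mem le_rfl (Nat.le_succ j) hm)]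
      exact h1 i j ((hν _).1 hm).1
    · intro i j hm
      rw [hne _ hm, hne _ (ν.up_left_mem (Nat.le_succ i) le_rfl hm)]
      exact h2 i j ((hν _).1 hm).1
    · intro d hd
      by_cases hdc : d = c
      · subst hdc; simp
      · simp only [Function.update_of_ne hdc]
        exact h3 d fun h => hd ((hν d).2 ⟨h, hdc⟩)
  · obtain ⟨T, hb, h1, h2, h3⟩ := T
    have hne : ∀ d, d ∈ ν → Function.update T c p d = T d := fun d hd =>
      Function.update_of_ne (((hν d).1 hd).2) _ _
    have hlt : ∀ d, d ∈ ν → T d < p := by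
      intro d hd
      have := hb.mapsTo hd
      simpa [hcard] using this
    have hcase : ∀ d, d ∈ μ → d = c ∨ d ∈ ν := by
      intro d hd
      by_cases h : d = c
      · exact Or.inl h
      · exact Or.inr ((hν d).2 ⟨hd, h⟩)
    refine ⟨⟨⟨?_, ?_, ?_⟩, ?_, ?_, ?_⟩, by simp⟩
    · intro d hd
      simp only [Finset.coe_range, Set.mem_Iio, hp]
      rcases hcase d hd with rfl | h
      · simp
      · rw [hne d h]; have := hlt d h; omega
    · intro d hd e he hde
      have hde : Function.update T c p d = Function.update T c p e := hde
      rcases hcase d hd with rfl | h <;> rcases hcase e he with h' | h'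
      · exact h'.symm
      · rw [hne e h', Function.update_self] at hde
        have := hlt e h'; omega
      · subst h'
        rw [hne d h, Function.update_self] at hde
        have := hlt d h; omega
      · rw [hne d h, hne e h'] at hde
        exact hb.injOn h h' hde
    · intro x hx
      simp only [Finset.coe_range, Set.mem_Iio, hp] at hx
      by_cases hxp : x = p
      · exact ⟨c, hc, by simp [hxp]⟩
      · obtain ⟨d, hd, rfl⟩ := hb.surjOn (show x ∈ ((Finset.range ν.card : Finset ℕ) : Set ℕ) by
          simp [hcard]; omega)
        exact ⟨d, ((hν d).1 hd).1, hne d hd⟩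
    · intro i j hm
      have hm' := μ.up_left_mem le_rfl (Nat.le_succ j) hm
      rcases hcase _ hm with h | h
      · have h' : (i, j) ∈ ν := (hν _).2 ⟨hm', by rw [← h]; simp⟩
        rw [hne _ h', h, Function.update_self]
        exact hlt _ h'
      · have h' := ν.up_left_mem le_rfl (Nat.le_succ j) h
        rw [hne _ h', hne _ h]
        exact h1 i j h
    · intro i j hm
      have hm' := μ.up_left_mem (Nat.le_succ i) le_rfl hm
      rcases hcase _ hm with h | h
      · have h' : (i, j) ∈ ν := (hν _).2 ⟨hm', by rw [← h]; simp⟩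
        rw [hne _ h', h, Function.update_self]
        exact hlt _ h'
      · have h' := ν.up_left_mem (Nat.le_succ i) le_rfl h
        rw [hne _ h', hne _ h]
        exact h2 i j h
    · intro d hd
      have hdc : d ≠ c := by rintro rfl; exact hd hc
      simp only [Function.update_of_ne hdc]
      exact h3 d fun h => hd ((hν d).1 h).1
  · rintro ⟨T, ⟨hb, h1, h2, h3⟩, h4⟩
    apply Subtype.ext
    simp [← h4]
  · rintro ⟨T, hb, h1, h2, h3⟩
    apply Subtype.ext
    simp [← h3 c hcν]

/-- Row lengths after removing one box from row `i`. -/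
def decRow (μ : YoungDiagram) (i : ℕ) (r : ℕ) : ℕ := if r = i then μ.rowLen r - 1 else μ.rowLen r

lemma decRow_le (μ : YoungDiagram) (i : ℕ) : ∀ r, decRow μ i r ≤ μ.rowLen r := by
  intro r; unfold decRow; split_ifs <;> omega

lemma decRow_anti (μ : YoungDiagram) (i : ℕ) (hi : μ.rowLen (i + 1) < μ.rowLen i) :
    Antitone (decRow μ i) := by
  refine antitone_nat_of_succ_le fun r => ?_
  have := μ.rowLen_anti r (r + 1) (Nat.le_succ r)
  unfold decRow
  split_ifs with h1 h2 h2
  · omega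
  · omega
  · subst h2; omega
  · exact this

lemma mem_cut_decRow (μ : YoungDiagram) (i : ℕ) (hi : μ.rowLen (i + 1) < μ.rowLen i) (d : ℕ × ℕ) :
    d ∈ cut μ (decRow μ i) ↔ d ∈ μ ∧ d ≠ (i, μ.rowLen i - 1) := by
  obtain ⟨r, j⟩ := d
  rw [mem_cut (decRow_anti μ i hi) (decRow_le μ i), YoungDiagram.mem_iff_lt_rowLen, decRow]
  simp only [ne_eq, Prod.mk.injEq, not_and]
  split_ifs with h
  · subst h
    simp only [forall_const]
    omega
  · simp [h]

lemma syt_rec (μ : YoungDiagram) (m p : ℕ) (hR : μ.rowLen m = 0) (hp : μ.card = p + 1) :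
    sytCount μ = ∑ a ∈ (univ : Finset (Fin m)).filter
      (fun a : Fin m => μ.rowLen (m - 1 - a + 1) < μ.rowLen (m - 1 - a)),
        sytCount (cut μ (decRow μ (m - 1 - a))) := by
  classical
  set S := (finite_isSyt μ).toFinset with hS
  have hSm : ∀ f, f ∈ S ↔ IsSyt μ f := by intro f; simp [hS]
  set I : Finset (Fin m) := (univ : Finset (Fin m)).filter
      (fun a : Fin m => μ.rowLen (m - 1 - a + 1) < μ.rowLen (m - 1 - a)) with hI
  have hIm : ∀ a : Fin m, a ∈ I ↔ μ.rowLen (m - 1 - a + 1) < μ.rowLen (m - 1 - a) := by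
    intro a; simp [hI]
  let cor : Fin m → ℕ × ℕ := fun a => (m - 1 - a, μ.rowLen (m - 1 - a) - 1)
  have hcor : ∀ a ∈ I, cor a ∈ μ := by
    intro a ha
    rw [hIm] at ha
    exact YoungDiagram.mem_iff_lt_rowLen.2 (by omega)
  have hU : S = I.biUnion (fun a => S.filter (fun T => T (cor a) = p)) := by
    ext T
    simp only [Finset.mem_biUnion, Finset.mem_filter]
    constructor
    · intro hT
      have hT' := (hSm T).1 hT
      obtain ⟨⟨i, j⟩, hd, hTd⟩ := hT'.1.surjOn
        (show p ∈ ((Finset.range μ.card : Finset ℕ) : Set ℕ) by simp [hp])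
      have hd : (i, j) ∈ μ := hd
      have hmax : ∀ d ∈ μ, T d ≤ p := by
        intro d hd
        have := hT'.1.mapsTo hd
        simp [hp] at this
        omega
      have hj : j < μ.rowLen i := YoungDiagram.mem_iff_lt_rowLen.1 hd
      have h1 : ¬ j + 1 < μ.rowLen i := by
        intro h
        have hm := YoungDiagram.mem_iff_lt_rowLen.2 h
        have := hT'.2.1 i j hm
        have := hmax _ hm
        omega
      have h2 : ¬ j < μ.rowLen (i + 1) := by
        intro h
        have hm := YoungDiagram.mem_iff_lt_rowLen.2 h
        have := hT'.2.2.1 i j hm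
        have := hmax _ hm
        omega
      have him : i < m := by
        by_contra h
        have := μ.rowLen_anti m i (by omega)
        omega
      have e : m - 1 - (m - 1 - i) = i := by omega
      refine ⟨⟨m - 1 - i, by omega⟩, ?_, hT, ?_⟩
      · rw [hIm]; simp only [e]; omega
      · simp only [cor, e]
        rw [show μ.rowLen i - 1 = j by omega]
        exact hTd
    · rintro ⟨a, _, h, _⟩; exact h
  rw [sytCount, Set.ncard_eq_toFinset_card _ (finite_isSyt μ), ← hS, hU, Finset.card_biUnion]
  · refine Finset.sum_congr rfl fun a ha => ?_
    rw [← (syt_fiber μ (cut μ (decRow μ (m - 1 - a))) (cor a) p (hcor a ha) hp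
      (mem_cut_decRow μ _ ((hIm a).1 ha))).2, ← Set.ncard_coe_finset]
    congr 1
    ext T
    simp [hSm]
  · intro a ha b hb hab
    rw [Function.onFun, Finset.disjoint_left]
    intro T h1 h2
    rw [Finset.mem_filter, hSm] at h1 h2
    have := h1.1.1.injOn (hcor a ha) (hcor b hb) (h1.2.trans h2.2.symm)
    simp only [cor, Prod.mk.injEq] at this
    apply hab
    ext
    omega

lemma card_eq_sum (μ : YoungDiagram) (m : ℕ) (hR : μ.rowLen m = 0) :
    μ.card = ∑ i ∈ range m, μ.rowLen i := by
  have : μ.cells = (range m).biUnion (fun i => μ.row i) := by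
    ext ⟨i, j⟩
    simp only [Finset.mem_biUnion, YoungDiagram.mem_row_iff, YoungDiagram.mem_cells, Finset.mem_range]
    constructor
    · intro h
      refine ⟨i, ?_, h, rfl⟩
      by_contra hi
      have := μ.rowLen_anti m i (by omega)
      have := YoungDiagram.mem_iff_lt_rowLen.1 h
      omega
    · rintro ⟨_, _, h, _⟩; exact h
  rw [YoungDiagram.card, this, Finset.card_biUnion]
  · simp [YoungDiagram.rowLen_eq_card]
  · intro a _ b _ hab
    rw [Function.onFun, Finset.disjoint_left]
    intro d h1 h2
    rw [YoungDiagram.mem_row_iff] at h1 h2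
    exact hab (h1.2.symm.trans h2.2)

lemma sum_revLen (μ : YoungDiagram) (m : ℕ) (hR : μ.rowLen m = 0) :
    ∑ a, revLen μ m a = μ.card := by
  rw [card_eq_sum μ m hR, ← Finset.sum_range_reflect, Finset.sum_range]
  rfl

lemma syt_formula (m p : ℕ) : ∀ μ : YoungDiagram, μ.rowLen m = 0 → μ.card = p →
    (sytCount μ : ℚ) * ∏ a : Fin m, ((revLen μ m a + a).factorial : ℚ)
      = p.factorial * vdet (shv μ m) := by
  induction p with
  | zero =>
    intro μ hR hp
    have hb : μ = ⊥ := by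
      apply SetLike.ext
      intro d
      have : d ∉ μ := by
        intro h
        have h' : d ∈ μ.cells := h
        rw [Finset.card_eq_zero.1 hp] at h'
        simp at h'
      simp [this]
    have h0 : ∀ i, μ.rowLen i = 0 := fun i => rowLen_eq_of fun j => by simp [hb]
    have h1 : sytCount μ = 1 := by
      rw [hb, sytCount, Set.ncard_eq_one]
      refine ⟨fun _ => 0, ?_⟩
      ext f
      simp only [IsSyt, Set.mem_ofPred_eq, Set.mem_singleton_iff]
      constructor
      · rintro ⟨_, _, _, h⟩
        funext c
        exact h c (YoungDiagram.notMem_bot c)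
      · rintro rfl
        simp [YoungDiagram.card]
    have h2 : shv μ m = fun i : Fin m => ((i : ℕ) : ℚ) := by
      funext a; simp [shv, revLen, h0]
    rw [h1, h2, vdet_id, Finset.prod_range]
    simp [revLen, h0]
  | succ p ih =>
    intro μ hR hp
    have hsum : ∑ a, shv μ m a - ∑ a : Fin m, ((a : ℕ) : ℚ) = (p + 1 : ℕ) := by
      rw [← hp, ← sum_revLen μ m hR]
      simp [shv, Finset.sum_add_distrib]
    rw [Nat.factorial_succ, Nat.cast_mul, mul_comm ((p + 1 : ℕ) : ℚ), mul_assoc, ← hsum,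
      ← vdet_remove, syt_rec μ m p hR hp, Finset.mul_sum, Nat.cast_sum, Finset.sum_mul,
      Finset.sum_filter]
    refine Finset.sum_congr rfl fun a _ => ?_
    split_ifs with hcorner
    · set i := m - 1 - (a : ℕ) with hi
      have hc := (syt_fiber μ (cut μ (decRow μ i)) (i, μ.rowLen i - 1) p
        (YoungDiagram.mem_iff_lt_rowLen.2 (by omega)) hp (mem_cut_decRow μ i hcorner)).1
      have hrl := rowLen_cut (decRow_anti μ i hcorner) (decRow_le μ i)
      have hih := ih (cut μ (decRow μ i)) (by
        rw [hrl]; have := decRow_le μ i m; omega) hc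
      have hrev : ∀ b, revLen (cut μ (decRow μ i)) m b =
          if b = a then revLen μ m b - 1 else revLen μ m b := by
        intro b
        simp only [revLen, hrl, decRow]
        by_cases hb : b = a
        · subst hb; simp [hi]
        · have : (b : ℕ) ≠ a := fun h => hb (Fin.ext h)
          rw [if_neg hb, if_neg (by omega)]
      have hpos : 0 < revLen μ m a := by
        change 0 < μ.rowLen i
        omega
      have hv : shv (cut μ (decRow μ i)) m = Function.update (shv μ m) a (shv μ m a - 1) := by
        funext b
        by_cases hb : b = a
        · subst hb
          simp only [shv, hrev, if_true, Function.update_self]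
          rw [Nat.cast_sub (by omega)]
          push_cast
          ring
        · simp only [shv, hrev, hb, if_false, Function.update_of_ne, ne_eq, not_false_eq_true]
      have hprod : ∏ b : Fin m, ((revLen μ m b + b).factorial : ℚ) = shv μ m a *
          ∏ b : Fin m, ((revLen (cut μ (decRow μ i)) m b + b).factorial : ℚ) := by
        rw [← Finset.mul_prod_erase _ _ (Finset.mem_univ a),
          ← Finset.mul_prod_erase univ (fun b : Fin m =>
            ((revLen (cut μ (decRow μ i)) m b + b).factorial : ℚ)) (Finset.mem_univ a), ← mul_assoc]
        congr 1
        · rw [hrev, if_pos rfl, shv]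
          obtain ⟨q, hq⟩ : ∃ q, revLen μ m a = q + 1 := ⟨revLen μ m a - 1, by omega⟩
          rw [hq, show q + 1 + (a : ℕ) = (q + a) + 1 by ring, Nat.factorial_succ]
          rw [Nat.add_sub_cancel]
          push_cast
          ring
        · refine Finset.prod_congr rfl fun b hb => ?_
          rw [hrev, if_neg (Finset.ne_of_mem_erase hb)]
      rw [hprod, ← hv, mul_left_comm, hih]
      ring
    · have hle := μ.rowLen_anti (m - 1 - a) (m - 1 - a + 1) (Nat.le_succ _)
      by_cases ha : (a : ℕ) = 0
      · have : shv μ m a = 0 := by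
          have : m - 1 - (a : ℕ) + 1 = m := by omega
          rw [this] at hcorner
          have : μ.rowLen (m - 1 - a) = 0 := by omega
          rw [shv, revLen, this, ha]
          simp
        simp [this]
      · set b : Fin m := ⟨a - 1, by omega⟩ with hb
        have hba : b ≠ a := by
          intro h; have := congrArg Fin.val h; simp [hb] at this; omega
        have : vdet (Function.update (shv μ m) a (shv μ m a - 1)) = 0 := by
          apply vdet_eq_zero _ a b hba.symm
          rw [Function.update_self, Function.update_of_ne hba]
          simp only [shv, revLen, hb]
          have e : m - 1 - (a - 1 : ℕ) = m - 1 - a + 1 := by omega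
          have e2 : μ.rowLen (m - 1 - a + 1) = μ.rowLen (m - 1 - a) := by omega
          rw [e, e2, Nat.cast_sub (by omega)]
          push_cast
          ring
        simp [this]

lemma swap_isSyt {μ : YoungDiagram} {T : ℕ × ℕ → ℕ} (h : IsSyt μ T) :
    IsSyt μ.transpose (T ∘ Prod.swap) := by
  obtain ⟨hb, h1, h2, h3⟩ := h
  have hcard : μ.transpose.card = μ.card := by
    rw [YoungDiagram.card, YoungDiagram.card]
    refine Finset.card_bij (fun d _ => d.swap) ?_ ?_ ?_
    · intro d hd; exact YoungDiagram.mem_transpose.1 hd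
    · intro d _ e _ h; exact Prod.swap_injective h
    · intro d hd
      exact ⟨d.swap, YoungDiagram.mem_transpose.2 (by simpa using hd), by simp⟩
  refine ⟨⟨?_, ?_, ?_⟩, ?_, ?_, ?_⟩
  · intro d hd
    rw [hcard]
    exact hb.mapsTo (YoungDiagram.mem_transpose.1 hd)
  · intro d hd e he h
    exact Prod.swap_injective (hb.injOn (YoungDiagram.mem_transpose.1 hd)
      (YoungDiagram.mem_transpose.1 he) h)
  · intro x hx
    rw [hcard] at hx
    obtain ⟨d, hd, rfl⟩ := hb.surjOn hx
    exact ⟨d.swap, YoungDiagram.mem_transpose.2 (by simpa using hd), by simp⟩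
  · intro i j hm
    exact h2 j i (YoungDiagram.mem_transpose.1 hm)
  · intro i j hm
    exact h1 j i (YoungDiagram.mem_transpose.1 hm)
  · intro c hc
    exact h3 _ fun h => hc (YoungDiagram.mem_transpose.2 h)

lemma card_transpose' (μ : YoungDiagram) : μ.transpose.card = μ.card := by
  rw [YoungDiagram.card, YoungDiagram.card]
  refine Finset.card_bij (fun d _ => d.swap) ?_ ?_ ?_
  · intro d hd; exact YoungDiagram.mem_transpose.1 hd
  · intro d _ e _ h; exact Prod.swap_injective h
  · intro d hd
    exact ⟨d.swap, YoungDiagram.mem_transpose.2 (by simpa using hd), by simp⟩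

lemma sytCount_transpose (μ : YoungDiagram) : sytCount μ.transpose = sytCount μ := by
  rw [sytCount, sytCount, ← Nat.card_coe_set_eq, ← Nat.card_coe_set_eq]
  refine Nat.card_congr ⟨fun T => ⟨T.1 ∘ Prod.swap, ?_⟩, fun T => ⟨T.1 ∘ Prod.swap, ?_⟩, ?_, ?_⟩
  · have := swap_isSyt T.2
    rwa [YoungDiagram.transpose_transpose] at this
  · exact swap_isSyt T.2
  · rintro ⟨T, _⟩; apply Subtype.ext; funext c; simp
  · rintro ⟨T, _⟩; apply Subtype.ext; funext c; simp

lemma prod_reflect_fin (m : ℕ) (f : ℕ → ℕ → ℚ) :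
    ∏ a : Fin m, f (m - 1 - a) a = ∏ i ∈ range m, f i (m - 1 - i) := by
  rw [← Finset.prod_range_reflect, Finset.prod_range]
  refine Finset.prod_congr rfl fun a _ => ?_
  congr 1
  omega

lemma fact_col (x l : ℕ) : (x + l).factorial = x.factorial * ∏ i ∈ range l, (x + 1 + i) := by
  induction l with
  | zero => simp
  | succ l ih =>
    rw [← Nat.add_assoc, Nat.factorial_succ, ih, Finset.prod_range_succ]
    ring

lemma fact_row (x l : ℕ) (h : l ≤ x) : x.factorial = (x - l).factorial * ∏ j ∈ range l, (x - j) := by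
  induction l with
  | zero => simp
  | succ l ih =>
    rw [ih (by omega), Finset.prod_range_succ, show x - l = (x - (l + 1)) + 1 by omega,
      Nat.factorial_succ]
    ring

lemma content_prod (m n : ℕ) (μ : YoungDiagram) (hm : ∀ i j, (i, j) ∈ μ → i < m ∧ j < n) :
    (∏ j ∈ range n, (μ.colLen j + (n - 1 - j)).factorial) * ∏ i ∈ range m, (n + i - μ.rowLen i).factorial
      = (∏ j ∈ range n, j.factorial) * ∏ i ∈ range m, (n + i).factorial := by
  have hrow : ∀ i, μ.rowLen i ≤ n := by
    intro i
    by_contra h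
    have := (hm i n (YoungDiagram.mem_iff_lt_rowLen.2 (by omega))).2
    omega
  have h1 : ∏ j ∈ range n, (μ.colLen j + (n - 1 - j)).factorial =
      (∏ j ∈ range n, j.factorial) * ∏ j ∈ range n, ∏ i ∈ range (μ.colLen j), (n + i - j) := by
    rw [← Finset.prod_range_reflect (fun j => j.factorial), ← Finset.prod_mul_distrib]
    refine Finset.prod_congr rfl fun j hj => ?_
    rw [Finset.mem_range] at hj
    rw [add_comm, fact_col]
    congr 1
    refine Finset.prod_congr rfl fun i _ => ?_
    omega
  have h2 : ∏ i ∈ range m, (n + i).factorial =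
      (∏ i ∈ range m, (n + i - μ.rowLen i).factorial) *
        ∏ i ∈ range m, ∏ j ∈ range (μ.rowLen i), (n + i - j) := by
    rw [← Finset.prod_mul_distrib]
    refine Finset.prod_congr rfl fun i _ => ?_
    exact fact_row _ _ (by have := hrow i; omega)
  have h3 : ∏ i ∈ range m, ∏ j ∈ range (μ.rowLen i), (n + i - j) =
      ∏ j ∈ range n, ∏ i ∈ range (μ.colLen j), (n + i - j) := by
    apply Finset.prod_comm'
    intro i j
    simp only [Finset.mem_range, ← YoungDiagram.mem_iff_lt_rowLen, ← YoungDiagram.mem_iff_lt_colLen]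
    constructor
    · rintro ⟨_, h⟩; exact ⟨h, (hm i j h).2⟩
    · rintro ⟨h, _⟩; exact ⟨(hm i j h).1, h⟩
  rw [h1, h2, h3]
  ring

lemma vdet_neg_rev {m : ℕ} (v w : Fin m → ℚ) (N : ℚ) (h : ∀ a, w a = N - v a.rev) :
    vdet w = vdet v := by
  rw [vdet, vdet, Matrix.det_vandermonde, Matrix.det_vandermonde, Finset.prod_sigma',
    Finset.prod_sigma']
  refine Finset.prod_bij' (fun x _ => ⟨x.2.rev, x.1.rev⟩) (fun x _ => ⟨x.2.rev, x.1.rev⟩)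
    ?_ ?_ ?_ ?_ ?_
  · rintro ⟨i, j⟩ hx; simpa using hx
  · rintro ⟨i, j⟩ hx; simpa using hx
  · rintro ⟨i, j⟩ hx; simp
  · rintro ⟨i, j⟩ hx; simp
  · rintro ⟨i, j⟩ hx; simp [h]

lemma vdet_ne_zero (μ : YoungDiagram) (m : ℕ) : vdet (shv μ m) ≠ 0 := by
  rw [vdet, Matrix.det_vandermonde_ne_zero_iff]
  have : StrictMono (fun a : Fin m => revLen μ m a + a) := by
    intro a b hab
    have := μ.rowLen_anti (m - 1 - b) (m - 1 - a) (by omega)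
    simp only [revLen]
    omega
  intro a b h
  apply this.injective
  simp only [shv] at h
  exact_mod_cast h

/-- for `λ ⊆ n^m` with `p` boxes,
`dim S^λ(ℂ^m)·dim S^{λ'}(ℂ^n) / C(mn,p) = f^λ · f^{n^m/λ} / f^{n^m}`. -/
theorem external_power_component_probability (m n p : ℕ) (μ : YoungDiagram)
    (hμ : μ ≤ rect m n) (hp : μ.card = p) :
    (ssytCount μ m * ssytCount μ.transpose n : ℚ) / (m * n).choose p
      = (sytCount μ * sytCount (complement m n μ) : ℚ) / sytCount (rect m n) := by
  have hin : ∀ i j, (i, j) ∈ μ → i < m ∧ j < n := by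
    intro i j h
    have h' : (i, j) ∈ (rect m n).cells := hμ h
    simpa [rect] using h'
  have hRm : μ.rowLen m = 0 := rowLen_eq_of fun j =>
    ⟨fun h => absurd (hin m j h).1 (lt_irrefl m), fun h => absurd h (Nat.not_lt_zero j)⟩
  have hrow : ∀ i, μ.rowLen i ≤ n := by
    intro i
    by_contra h
    have := (hin i n (YoungDiagram.mem_iff_lt_rowLen.2 (by omega))).2
    omega
  have hRn : μ.transpose.rowLen n = 0 := rowLen_eq_of fun j =>
    ⟨fun h => absurd (hin j n (YoungDiagram.mem_transpose.1 h)).2 (lt_irrefl n),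
      fun h => absurd h (Nat.not_lt_zero j)⟩
  have hpsum : μ.card = ∑ i ∈ range m, μ.rowLen i := card_eq_sum μ m hRm
  -- the rectangle
  have hrectlen : ∀ i, (rect m n).rowLen i = if i < m then n else 0 := by
    intro i
    refine rowLen_eq_of fun j => ?_
    rw [← YoungDiagram.mem_cells]
    simp only [rect, Finset.mem_product, Finset.mem_range]
    split_ifs with h <;> simp [h]
  have hrectcard : (rect m n).card = m * n := by simp [YoungDiagram.card, rect]
  have hcomplen : ∀ i, (complement m n μ).rowLen i = if i < m then n - μ.rowLen (m - 1 - i) else 0 := by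
    intro i
    refine rowLen_eq_of fun j => ?_
    rw [← YoungDiagram.mem_cells]
    simp only [complement, Finset.mem_filter, Finset.mem_product, Finset.mem_range]
    split_ifs with h
    · simp only [h, true_and]; omega
    · simp [h]
  have hple : p ≤ m * n := by
    rw [← hp, hpsum]
    calc ∑ i ∈ range m, μ.rowLen i ≤ ∑ _i ∈ range m, n := Finset.sum_le_sum fun i _ => hrow i
      _ = m * n := by simp
  have hcompcard : (complement m n μ).card = m * n - p := by
    rw [card_eq_sum _ m (by rw [hcomplen]; simp)]
    have : ∑ i ∈ range m, (complement m n μ).rowLen i = ∑ i ∈ range m, (n - μ.rowLen i) := by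
      rw [← Finset.sum_range_reflect]
      refine Finset.sum_congr rfl fun i hi => ?_
      rw [Finset.mem_range] at hi
      rw [hcomplen, if_pos (by omega)]
      congr 2
      omega
    have h2 : ∑ i ∈ range m, (n - μ.rowLen i) + ∑ i ∈ range m, μ.rowLen i = m * n := by
      rw [← Finset.sum_add_distrib, Finset.sum_congr rfl fun i _ => Nat.sub_add_cancel (hrow i)]
      simp
    omega
  -- the formulas
  have A1 := ssyt_formula m μ hRm
  have A2 := ssyt_formula n μ.transpose hRn
  have B2 := syt_formula n p μ.transpose hRn (by rw [card_transpose', hp])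
  have B3 := syt_formula m (m * n - p) (complement m n μ) (by rw [hcomplen]; simp) hcompcard
  have B4 := syt_formula m (m * n) (rect m n) (by rw [hrectlen]; simp) hrectcard
  have hr0 : (sytCount (rect m n) : ℚ) ≠ 0 := by
    intro h
    rw [h, zero_mul] at B4
    exact mul_ne_zero (Nat.cast_ne_zero.2 (Nat.factorial_ne_zero _)) (vdet_ne_zero _ _) B4.symm
  rw [sytCount_transpose] at B2
  have e3 : vdet (shv (complement m n μ) m) = vdet (shv μ m) := by
    apply vdet_neg_rev _ _ ((n : ℚ) + m - 1)
    intro a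
    simp only [shv, revLen, hcomplen]
    rw [if_pos (by omega), Fin.val_rev]
    rw [Nat.cast_sub (hrow _), Nat.cast_sub (by omega)]
    rw [show m - 1 - (m - 1 - (a : ℕ)) = m - 1 - (m - (a + 1)) by omega]
    push_cast
    ring
  have e4 : vdet (shv (rect m n) m) = ∏ i ∈ range m, (i.factorial : ℚ) := by
    rw [← vdet_id]
    have : shv (rect m n) m = fun a : Fin m => ((a : ℕ) : ℚ) + n := by
      funext a
      simp only [shv, revLen, hrectlen]
      rw [if_pos (by omega)]
      ring
    rw [this, vdet, vdet]
    exact Matrix.det_vandermonde_add _ _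
  have p2 : ∏ a : Fin n, ((revLen μ.transpose n a + a).factorial : ℚ) =
      ∏ j ∈ range n, ((μ.colLen j + (n - 1 - j)).factorial : ℚ) := by
    rw [← prod_reflect_fin n (fun i a => ((μ.colLen i + a).factorial : ℚ))]
    simp [revLen]
  have p3 : ∏ a : Fin m, ((revLen (complement m n μ) m a + a).factorial : ℚ) =
      ∏ i ∈ range m, ((n + i - μ.rowLen i).factorial : ℚ) := by
    rw [Finset.prod_range]
    refine Finset.prod_congr rfl fun a _ => ?_
    simp only [revLen, hcomplen]
    rw [if_pos (by omega), show m - 1 - (m - 1 - (a : ℕ)) = a by omega]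
    have := hrow a
    congr 2
    omega
  have p4 : ∏ a : Fin m, ((revLen (rect m n) m a + a).factorial : ℚ) =
      ∏ i ∈ range m, ((n + i).factorial : ℚ) := by
    rw [Finset.prod_range]
    refine Finset.prod_congr rfl fun a _ => ?_
    simp only [revLen, hrectlen]
    rw [if_pos (by omega)]
  rw [p2] at B2
  rw [p3, e3] at B3
  rw [p4, e4] at B4
  have P : (∏ j ∈ range n, ((μ.colLen j + (n - 1 - j)).factorial : ℚ)) *
      ∏ i ∈ range m, ((n + i - μ.rowLen i).factorial : ℚ)
      = (∏ j ∈ range n, (j.factorial : ℚ)) * ∏ i ∈ range m, ((n + i).factorial : ℚ) := by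
    exact_mod_cast content_prod m n μ hin
  have hch : (((m * n).choose p : ℕ) : ℚ) * p.factorial * (m * n - p).factorial = (m * n).factorial := by
    exact_mod_cast Nat.choose_mul_factorial_mul_factorial hple
  have hc0 : (((m * n).choose p : ℕ) : ℚ) ≠ 0 := Nat.cast_ne_zero.2 (Nat.choose_pos hple).ne'
  have hsfm : ∏ i ∈ range m, (i.factorial : ℚ) ≠ 0 :=
    Finset.prod_ne_zero_iff.2 fun i _ => Nat.cast_ne_zero.2 (Nat.factorial_ne_zero _)
  have hQ : (∏ j ∈ range n, (j.factorial : ℚ)) * ∏ i ∈ range m, ((n + i).factorial : ℚ) ≠ 0 :=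
    mul_ne_zero
      (Finset.prod_ne_zero_iff.2 fun i _ => Nat.cast_ne_zero.2 (Nat.factorial_ne_zero _))
      (Finset.prod_ne_zero_iff.2 fun i _ => Nat.cast_ne_zero.2 (Nat.factorial_ne_zero _))
  rw [div_eq_div_iff hc0 hr0]
  generalize (∏ j ∈ range n, ((μ.colLen j + (n - 1 - j)).factorial : ℚ)) = X at *
  generalize ∏ i ∈ range m, ((n + i - μ.rowLen i).factorial : ℚ) = Y at *
  generalize ∏ i ∈ range m, ((n + i).factorial : ℚ) = Z at *
  generalize ∏ i ∈ range m, (i.factorial : ℚ) = F at *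
  generalize ∏ i ∈ range n, (i.factorial : ℚ) = G at *
  apply mul_right_cancel₀ (mul_ne_zero hsfm hQ)
  generalize vdet (shv μ m) = D at *
  generalize vdet (shv μ.transpose n) = D' at *
  calc (ssytCount μ m * ssytCount μ.transpose n : ℚ) * sytCount (rect m n) * (F * (G * Z))
      = (ssytCount μ m * F) * (ssytCount μ.transpose n * G) * (sytCount (rect m n) * Z) := by ring
    _ = D * D' * ((m * n).factorial * F) := by rw [A1, A2, B4]
    _ = ((m * n).choose p : ℕ) * (p.factorial * D') * ((m * n - p).factorial * D) * F := by
        rw [← hch]; ring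
    _ = ((m * n).choose p : ℕ) * (sytCount μ * X) * (sytCount (complement m n μ) * Y) * F := by
        rw [B2, B3]
    _ = (sytCount μ * sytCount (complement m n μ) : ℚ) * ((m * n).choose p : ℕ) * (F * (X * Y)) := by
        ring
    _ = _ := by rw [P]
end

section
/- For λ a partition contained in the m-row, n-column rectangle n^m, the product of hook lengths of λ times the product of hook lengths of the complementary partition λ̄ (complement of λ in n^m) times the number of SSYT of shape λ with entries in {1,…,m} times the number of SSYT of shape λ' with entries in {1,…,n} equals the product of hook lengths of the full rectangle n^m. -/
open YoungDiagram Finset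

namespace HookAux

/-- Bialternant entry sequence: strictly increasing shifted row lengths. -/
def av (μ : YoungDiagram) (m p : ℕ) : ℕ := μ.rowLen (m - 1 - p) + p

/-- The complementary sequence, from the column lengths. -/
def bv (μ : YoungDiagram) (m j : ℕ) : ℕ := m + j - μ.colLen j

/-- Product of the factorials below `m`. -/
def sfm (m : ℕ) : ℕ := ∏ i ∈ range m, i.factorial

/-- Vandermonde product. -/
def vd (a : ℕ → ℕ) (m : ℕ) : ℕ := ∏ p ∈ range m, ∏ q ∈ range p, (a p - a q)

lemma rowLen_zero_of_le {μ : YoungDiagram} {m i : ℕ} (h : μ.rowLen m = 0) (hi : m ≤ i) :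
    μ.rowLen i = 0 := by
  have := μ.rowLen_anti m i hi; omega

lemma colLen_le {μ : YoungDiagram} {m : ℕ} (h : μ.rowLen m = 0) (j : ℕ) : μ.colLen j ≤ m := by
  by_contra hc
  have h1 : (m, j) ∈ μ := mem_iff_lt_colLen.2 (by omega)
  have := mem_iff_lt_rowLen.1 h1
  omega

lemma av_lt {μ : YoungDiagram} {m p q : ℕ} (hq : q < p) : av μ m q < av μ m p := by
  have := μ.rowLen_anti (m - 1 - p) (m - 1 - q) (by omega)
  unfold av; omega

lemma bv_lt {μ : YoungDiagram} {m : ℕ} (h : μ.rowLen m = 0) {j k : ℕ} (hjk : j < k) :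
    bv μ m j < bv μ m k := by
  have := μ.colLen_anti j k hjk.le
  have := colLen_le h j
  unfold bv; omega

lemma bv_lt_av_iff {μ : YoungDiagram} {m : ℕ} (h : μ.rowLen m = 0) {p j : ℕ} (hp : p < m) :
    (j < μ.rowLen (m - 1 - p) → bv μ m j < av μ m p) ∧
    (¬ j < μ.rowLen (m - 1 - p) → av μ m p < bv μ m j) := by
  have e : j < μ.rowLen (m - 1 - p) ↔ m - 1 - p < μ.colLen j := by
    rw [← mem_iff_lt_rowLen, ← mem_iff_lt_colLen]
  have := colLen_le h j
  unfold bv av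
  constructor
  · intro h1; have := e.1 h1; omega
  · intro h1; have := mt e.2 h1; omega

lemma prod_split {μ : YoungDiagram} {m : ℕ} (h : μ.rowLen m = 0) (p R : ℕ) (hp : p ≤ m)
    (ha : ∀ q < p, av μ m q < p + R) (hb : ∀ j < R, bv μ m j < p + R) (f : ℕ → ℕ) :
    (∏ q ∈ range p, f (av μ m q)) * ∏ j ∈ range R, f (bv μ m j) = ∏ x ∈ range (p + R), f x := by
  have ia : Function.Injective (av μ m) :=
    (strictMono_nat_of_lt_succ fun n => av_lt (Nat.lt_succ_self n)).injective
  have ib : Function.Injective (bv μ m) :=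
    (strictMono_nat_of_lt_succ fun n => bv_lt h (Nat.lt_succ_self n)).injective
  have hd : Disjoint ((range p).image (av μ m)) ((range R).image (bv μ m)) := by
    rw [Finset.disjoint_left]
    intro x hx hy
    simp only [mem_image, mem_range] at hx hy
    obtain ⟨q, hq, rfl⟩ := hx
    obtain ⟨j, hj, e⟩ := hy
    have := bv_lt_av_iff h (p := q) (j := j) (by omega)
    by_cases hc : j < μ.rowLen (m - 1 - q)
    · have := this.1 hc; omega
    · have := this.2 hc; omega
  have hu : ((range p).image (av μ m)) ∪ ((range R).image (bv μ m)) = range (p + R) := by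
    apply Finset.eq_of_subset_of_card_le
    · intro x hx
      simp only [mem_union, mem_image, mem_range] at hx ⊢
      rcases hx with ⟨q, hq, rfl⟩ | ⟨q, hq, rfl⟩
      · exact ha q hq
      · exact hb q hq
    · rw [Finset.card_union_of_disjoint hd, Finset.card_image_of_injective _ ia,
        Finset.card_image_of_injective _ ib]
      simp
  rw [← hu, Finset.prod_union hd, Finset.prod_image ia.injOn, Finset.prod_image ib.injOn]

lemma prod_sub_fact (N : ℕ) : ∏ x ∈ range N, (N - x) = N.factorial := by
  rw [← Finset.prod_range_reflect, ← Finset.prod_range_add_one_eq_factorial]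
  apply Finset.prod_congr rfl
  intro x hx
  have := mem_range.1 hx
  omega

lemma hookProd_rows {μ : YoungDiagram} {m : ℕ} (h : μ.rowLen m = 0) :
    hookProd μ = ∏ i ∈ range m, ∏ j ∈ range (μ.rowLen i), hookLength μ (i, j) := by
  rw [hookProd, Finset.prod_sigma']
  symm
  apply Finset.prod_nbij' (fun x => (x.1, x.2)) (fun c => ⟨c.1, c.2⟩)
  · intro x hx
    simp only [mem_sigma, mem_range] at hx
    exact (mem_cells _).2 (mem_iff_lt_rowLen.2 hx.2)
  · rintro ⟨i, j⟩ hx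
    have h1 := mem_iff_lt_rowLen.1 ((mem_cells _).1 hx)
    simp only [mem_sigma, mem_range]
    refine ⟨?_, h1⟩
    by_contra hc
    have := rowLen_zero_of_le h (not_lt.1 hc)
    omega
  · intros; rfl
  · intros; rfl
  · intros; rfl

/-- Frobenius' form of the hook product. -/
lemma hook_formula {μ : YoungDiagram} {m : ℕ} (h : μ.rowLen m = 0) :
    hookProd μ * vd (av μ m) m = ∏ p ∈ range m, (av μ m p).factorial := by
  rw [hookProd_rows h, ← Finset.prod_range_reflect, vd, ← Finset.prod_mul_distrib]
  apply Finset.prod_congr rfl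
  intro p hp
  have hp := mem_range.1 hp
  have key := prod_split h p (μ.rowLen (m - 1 - p)) hp.le
    (fun q hq => by have := av_lt (μ := μ) (m := m) hq; unfold av at this ⊢; omega)
    (fun j hj => by have := (bv_lt_av_iff h hp).1 hj; unfold av at this; omega)
    (fun x => av μ m p - x)
  rw [mul_comm, ← prod_sub_fact]
  have e : av μ m p = p + μ.rowLen (m - 1 - p) := by unfold av; omega
  rw [← e] at key
  rw [← key]
  congr 1
  apply Finset.prod_congr rfl
  intro j hj
  have hj := mem_range.1 hj
  have h2 := mem_iff_lt_colLen.1 (mem_iff_lt_rowLen.2 hj)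
  have := colLen_le h j
  simp only [hookLength, av, bv]
  omega

lemma hookProd_transpose (μ : YoungDiagram) : hookProd μ.transpose = hookProd μ := by
  unfold hookProd
  apply Finset.prod_nbij' Prod.swap Prod.swap
  · intro c hc; simpa using hc
  · intro c hc; simpa using hc
  · intros; simp
  · intros; simp
  · intro c hc
    simp [hookLength, add_comm]

lemma mem_rect {m n : ℕ} {c : ℕ × ℕ} : c ∈ rect m n ↔ c.1 < m ∧ c.2 < n := by
  rw [← mem_cells]; simp [rect]

lemma rowLen_eq_of {μ : YoungDiagram} {i r : ℕ} (h : ∀ j, (i, j) ∈ μ ↔ j < r) :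
    μ.rowLen i = r := by
  have h1 := h r
  have h2 := h (μ.rowLen i)
  rw [mem_iff_lt_rowLen] at h1 h2
  omega

lemma rowLen_rect (m n i : ℕ) : (rect m n).rowLen i = if i < m then n else 0 := by
  apply rowLen_eq_of
  intro j
  rw [mem_rect]
  split_ifs with h <;> simp [h]

lemma rowLen_compl (m n : ℕ) (μ : YoungDiagram) (i : ℕ) :
    (complement m n μ).rowLen i = if i < m then n - μ.rowLen (m - 1 - i) else 0 := by
  apply rowLen_eq_of
  intro j
  rw [← mem_cells]
  simp only [complement, mem_filter, mem_product, mem_range]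
  split_ifs with h <;> omega

lemma vd_congr {a b : ℕ → ℕ} {m : ℕ} (h : ∀ p < m, ∀ q < p, a p - a q = b p - b q) :
    vd a m = vd b m :=
  Finset.prod_congr rfl fun p hp => Finset.prod_congr rfl fun q hq =>
    h p (mem_range.1 hp) q (mem_range.1 hq)

lemma vd_reflect {a b : ℕ → ℕ} {m : ℕ}
    (h : ∀ p < m, ∀ q < p, b p - b q = a (m - 1 - q) - a (m - 1 - p)) :
    vd b m = vd a m := by
  unfold vd
  rw [Finset.prod_sigma', Finset.prod_sigma']
  apply Finset.prod_nbij' (fun x => ⟨m - 1 - x.2, m - 1 - x.1⟩) (fun x => ⟨m - 1 - x.2, m - 1 - x.1⟩)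
  · intro x hx; simp only [mem_sigma, mem_range] at hx ⊢; omega
  · intro x hx; simp only [mem_sigma, mem_range] at hx ⊢; omega
  · rintro ⟨x, y⟩ hx; simp only [mem_sigma, mem_range] at hx ⊢
    have e1 : m - 1 - (m - 1 - x) = x := by omega
    have e2 : m - 1 - (m - 1 - y) = y := by omega
    rw [e1, e2]
  · rintro ⟨x, y⟩ hx; simp only [mem_sigma, mem_range] at hx ⊢
    have e1 : m - 1 - (m - 1 - x) = x := by omega
    have e2 : m - 1 - (m - 1 - y) = y := by omega
    rw [e1, e2]
  · rintro ⟨x, y⟩ hx; simp only [mem_sigma, mem_range] at hx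
    exact h x hx.1 y hx.2

lemma vd_pos {μ : YoungDiagram} {m : ℕ} : 0 < vd (av μ m) m :=
  Finset.prod_pos fun p _ => Finset.prod_pos fun q hq => by
    have := av_lt (μ := μ) (m := m) (mem_range.1 hq); omega

lemma sfm_pos (m : ℕ) : 0 < sfm m := Finset.prod_pos fun i _ => i.factorial_pos

lemma vd_id (m : ℕ) : vd (fun p => p) m = sfm m :=
  Finset.prod_congr rfl fun p _ => prod_sub_fact p

lemma sfm_add (n m : ℕ) : sfm (n + m) = sfm n * ∏ p ∈ range m, (n + p).factorial := by
  unfold sfm; rw [Finset.prod_range_add]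

lemma hook_rect (m n : ℕ) : hookProd (rect m n) * sfm m * sfm n = sfm (m + n) := by
  have h0 : (rect m n).rowLen m = 0 := by simp [rowLen_rect]
  have h := hook_formula h0
  have ha : ∀ p < m, av (rect m n) m p = n + p := by
    intro p hp
    rw [av, rowLen_rect, if_pos (by omega)]
  rw [vd_congr (b := fun p => p) (fun p hp q hq => by
    rw [ha p hp, ha q (by omega)]; omega), vd_id,
    Finset.prod_congr rfl (fun p hp => by rw [ha p (mem_range.1 hp)])] at h
  rw [h, add_comm m n, sfm_add, mul_comm]

lemma rl_m {m n : ℕ} {μ : YoungDiagram} (hμ : μ ≤ rect m n) : μ.rowLen m = 0 := by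
  by_contra hc
  have : (m, 0) ∈ μ := mem_iff_lt_rowLen.2 (by omega)
  have := mem_rect.1 (hμ this)
  simp at this

lemma rl_le {m n : ℕ} {μ : YoungDiagram} (hμ : μ ≤ rect m n) (i : ℕ) : μ.rowLen i ≤ n := by
  by_contra hc
  have : (i, n) ∈ μ := mem_iff_lt_rowLen.2 (by omega)
  have := mem_rect.1 (hμ this)
  simp at this

lemma cl_n {m n : ℕ} {μ : YoungDiagram} (hμ : μ ≤ rect m n) : μ.transpose.rowLen n = 0 := by
  rw [rowLen_transpose]
  by_contra hc
  have : (0, n) ∈ μ := mem_iff_lt_colLen.2 (by omega)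
  have := mem_rect.1 (hμ this)
  simp at this

lemma av_compl {m n : ℕ} {μ : YoungDiagram} (hμ : μ ≤ rect m n) {p : ℕ} (hp : p < m) :
    av (complement m n μ) m p = m + n - 1 - av μ m (m - 1 - p) := by
  have h1 := rl_le hμ p
  rw [av, rowLen_compl, if_pos (by omega), av]
  have e : m - 1 - (m - 1 - p) = p := by omega
  rw [e]; omega

lemma compl_formula {m n : ℕ} {μ : YoungDiagram} (hμ : μ ≤ rect m n) : hookProd (complement m n μ) * vd (av μ m) m =
    ∏ p ∈ range m, (m + n - 1 - av μ m p).factorial := by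
  have h0 : (complement m n μ).rowLen m = 0 := by simp [rowLen_compl]
  have h := hook_formula h0
  rw [vd_reflect (a := av μ m)] at h
  · rw [h, ← Finset.prod_range_reflect]
    apply Finset.prod_congr rfl
    intro p hp
    have hp := mem_range.1 hp
    rw [av_compl hμ (by omega)]
    congr 3; omega
  · intro p hp q hq
    rw [av_compl hμ hp, av_compl hμ (by omega)]
    have := rl_le hμ q
    have := rl_le hμ p
    unfold av
    have e : m - 1 - (m - 1 - p) = p := by omega
    have e : m - 1 - (m - 1 - q) = q := by omega
    simp only [*]
    omega

lemma fact_union {m n : ℕ} {μ : YoungDiagram} (hμ : μ ≤ rect m n) : (∏ p ∈ range m, (m + n - 1 - av μ m p).factorial) *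
    ∏ j ∈ range n, (av μ.transpose n j).factorial = sfm (m + n) := by
  have h := prod_split (rl_m hμ) m n le_rfl
    (fun q hq => by have := rl_le hμ (m - 1 - q); unfold av; omega)
    (fun j hj => by
      unfold bv; have := colLen_le (rl_m hμ) j; omega)
    (fun x => (m + n - 1 - x).factorial)
  rw [Finset.prod_range_reflect (fun x => x.factorial)] at h
  rw [sfm, ← h]
  congr 1
  rw [← Finset.prod_range_reflect]
  apply Finset.prod_congr rfl
  intro j hj
  have hj := mem_range.1 hj
  have := colLen_le (rl_m hμ) j
  rw [av, bv, rowLen_transpose]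
  have e : n - 1 - (n - 1 - j) = j := by omega
  rw [e]
  congr 1; omega
open Matrix in
lemma det_choose_vd (a : ℕ → ℕ) (m : ℕ) (ha : StrictMono a) :
    (sfm m : ℤ) * (Matrix.of fun i j : Fin m => ((a i).choose j : ℤ)).det = vd a m := by
  have h := det_eval_matrixOfPolynomials_eq_det_vandermonde (fun i : Fin m => (a i : ℤ))
    (fun i => descPochhammer ℤ i) (fun i => descPochhammer_natDegree ℤ i)
    (fun i => monic_descPochhammer ℤ i)
  have h2 : (of fun i j : Fin m => (descPochhammer ℤ j).eval (a i : ℤ)).det =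
    (∏ i : Fin m, (Nat.factorial i : ℤ)) *
      (of fun i j : Fin m => (Nat.choose (a i) j : ℤ)).det := by
    rw [← det_mul_row]
    congr 1
    ext i j
    simp only [of_apply]
    rw [descPochhammer_eval_eq_descFactorial, Nat.descFactorial_eq_factorial_mul_choose]
    push_cast; rfl
  rw [h2, det_vandermonde] at h
  rw [sfm, ← Fin.prod_univ_eq_prod_range (fun i => i.factorial)]
  push_cast
  rw [← h, vd, ← Fin.prod_univ_eq_prod_range (fun p => ∏ q ∈ range p, (a p - a q))]
  have : ∀ p : Fin m, ∏ q ∈ range (p : ℕ), (a p - a q) = ∏ q ∈ Iio p, (a p - a q) := by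
    intro p
    rw [← Nat.Iio_eq_range, ← Fin.map_valEmbedding_Iio, Finset.prod_map]
    rfl
  simp only [this]
  push_cast
  rw [Finset.prod_comm' (s := univ) (t := fun i => Ioi i) (t' := univ) (s' := fun j => Iio j)]
  · apply Finset.prod_congr rfl
    intro p _
    apply Finset.prod_congr rfl
    intro q hq
    rw [Nat.cast_sub (ha (by simpa using hq)).le]
  · simp

lemma sum_choose (x y k : ℕ) (h : x ≤ y) :
    ∑ t ∈ Ico x y, (t.choose k : ℤ) = (y.choose (k + 1) : ℤ) - x.choose (k + 1) := by
  induction y, h using Nat.le_induction with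
  | base => simp
  | succ y hy ih =>
    rw [Finset.sum_Ico_succ_top hy, ih, Nat.choose_succ_succ y k]
    push_cast; ring

open Matrix in
lemma det_branch (m : ℕ) (a : ℕ → ℕ) (ha : StrictMono a) :
    (of fun i j : Fin (m + 1) => ((a i).choose j : ℤ)).det =
    ∑ y ∈ Fintype.piFinset (fun i : Fin m => Ico (a i) (a (i + 1))),
      (of fun i j : Fin m => ((y i).choose j : ℤ)).det := by
  have h1 := (detRowAlternating (n := Fin m) (R := ℤ)).toMultilinearMap.map_sum_finset
    (fun (i : Fin m) (t : ℕ) => (fun j : Fin m => (t.choose j : ℤ)))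
    (fun i : Fin m => Ico (a i) (a (i + 1)))
  refine Eq.trans ?_ h1
  have h2 := det_eq_of_forall_row_eq_smul_add_pred
    (A := of fun i j : Fin (m + 1) => ((a i).choose j : ℤ))
    (B := of fun i j : Fin (m + 1) => Fin.cases ((a 0).choose j : ℤ)
      (fun i : Fin m => ((a (i + 1)).choose j : ℤ) - ((a i).choose j : ℤ)) i)
    (fun _ => 1) (by intro j; simp) (by intro i j; simp)
  rw [h2, det_succ_column_zero, Fin.sum_univ_succ]
  simp only [of_apply, Fin.cases_zero, Fin.cases_succ]
  simp
  change _ = det _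
  congr 1
  ext i j
  simp [Finset.sum_apply, submatrix, sum_choose _ _ _ (ha (Nat.lt_succ_self i.1)).le]

/-- Bounded tableaux. -/
def SS (μ : YoungDiagram) (m : ℕ) : Set (SemistandardYoungTableau μ) :=
  {T | ∀ i j, (i, j) ∈ μ → T i j < m}

lemma SS_finite (μ : YoungDiagram) (m : ℕ) : (SS μ m).Finite := by
  let F : SS μ m → (μ.cells → Fin m) := fun T c => ⟨T.1 c.1.1 c.1.2, T.2 _ _ ((mem_cells _).1 c.2)⟩
  have hF : Function.Injective F := by
    intro T T' h
    apply Subtype.ext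
    apply SemistandardYoungTableau.ext
    intro i j
    by_cases hc : (i, j) ∈ μ
    · have := congrFun h ⟨(i, j), (mem_cells _).2 hc⟩
      simpa [F] using this
    · rw [T.1.zeros hc, T'.1.zeros hc]
  exact Finite.of_injective F hF

/-- The subdiagram of the cells with entry below `m`. -/
def low {μ : YoungDiagram} (T : SemistandardYoungTableau μ) (m : ℕ) : YoungDiagram where
  cells := μ.cells.filter fun c => T c.1 c.2 < m
  isLowerSet := by
    rintro ⟨a1, a2⟩ ⟨b1, b2⟩ ⟨h1, h2⟩ hb
    simp only [Finset.coe_filter, Set.mem_ofPred_eq, mem_cells] at *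
    refine ⟨μ.up_left_mem h1 h2 hb.1, ?_⟩
    have e1 := T.col_weak h1 (μ.up_left_mem le_rfl h2 hb.1)
    have e2 := T.row_weak_of_le h2 hb.1
    omega

lemma mem_low {μ : YoungDiagram} (T : SemistandardYoungTableau μ) (m : ℕ) (i j : ℕ) :
    (i, j) ∈ low T m ↔ (i, j) ∈ μ ∧ T i j < m := by
  rw [← mem_cells]; simp [low]

lemma entry_ge {μ : YoungDiagram} (T : SemistandardYoungTableau μ) {i j : ℕ} (h : (i, j) ∈ μ) :
    i ≤ T i j := by
  induction i with
  | zero => simp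
  | succ i ih =>
    have := ih (μ.up_left_mem (Nat.le_succ i) le_rfl h)
    have := T.col_strict (Nat.lt_add_one i) h
    omega

lemma diag_ext {μ ν : YoungDiagram} (h : ∀ i j, (i, j) ∈ μ ↔ (i, j) ∈ ν) : μ = ν := by
  apply SetLike.ext
  rintro ⟨i, j⟩
  exact h i j

lemma diag_ext_rowLen {μ ν : YoungDiagram} (h : ∀ i, μ.rowLen i = ν.rowLen i) : μ = ν :=
  diag_ext fun i j => by rw [mem_iff_lt_rowLen, mem_iff_lt_rowLen, h]

/-- `ν` is obtained from `μ` by removing a horizontal strip, and has at most `m` rows. -/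
structure Strip (μ ν : YoungDiagram) (m : ℕ) : Prop where
  le : ∀ i j, (i, j) ∈ ν → (i, j) ∈ μ
  ge : ∀ i j, (i + 1, j) ∈ μ → (i, j) ∈ ν
  rows : ν.rowLen m = 0

lemma strip_low {μ : YoungDiagram} {m : ℕ} {T : SemistandardYoungTableau μ} (hT : T ∈ SS μ (m + 1)) :
    Strip μ (low T m) m where
  le i j h := ((mem_low T m i j).1 h).1
  ge i j h := by
    rw [mem_low]
    refine ⟨μ.up_left_mem (Nat.le_succ i) le_rfl h, ?_⟩
    have := T.col_strict (Nat.lt_add_one i) h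
    have := hT _ _ h
    omega
  rows := by
    by_contra hc
    have h : (m, 0) ∈ low T m := mem_iff_lt_rowLen.2 (by omega)
    have := (mem_low _ _ _ _).1 h
    have := entry_ge T this.1
    omega

/-- Restriction of a tableau to a subdiagram. -/
def restr {μ ν : YoungDiagram} (T : SemistandardYoungTableau μ) (h : ∀ i j, (i, j) ∈ ν → (i, j) ∈ μ) :
    SemistandardYoungTableau ν where
  entry i j := if (i, j) ∈ ν then T i j else 0
  row_weak' {i j1 j2} hj hm := by
    rw [if_pos hm, if_pos (ν.up_left_mem le_rfl hj.le hm)]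
    exact T.row_weak hj (h _ _ hm)
  col_strict' {i1 i2 j} hj hm := by
    rw [if_pos hm, if_pos (ν.up_left_mem hj.le le_rfl hm)]
    exact T.col_strict hj (h _ _ hm)
  zeros' hm := if_neg hm

lemma restr_apply {μ ν : YoungDiagram} (T : SemistandardYoungTableau μ)
    (h : ∀ i j, (i, j) ∈ ν → (i, j) ∈ μ) (i j : ℕ) :
    restr T h i j = if (i, j) ∈ ν then T i j else 0 := rfl

/-- Extension of a tableau by the value `m` on a horizontal strip. -/
def extn {μ ν : YoungDiagram} {m : ℕ} (hs : Strip μ ν m) (T : SemistandardYoungTableau ν)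
    (hT : T ∈ SS ν m) : SemistandardYoungTableau μ where
  entry i j := if (i, j) ∈ ν then T i j else if (i, j) ∈ μ then m else 0
  row_weak' {i j1 j2} hj hm := by
    have h1 := μ.up_left_mem le_rfl hj.le hm
    by_cases h2 : (i, j2) ∈ ν
    · rw [if_pos h2, if_pos (ν.up_left_mem le_rfl hj.le h2)]
      exact T.row_weak hj h2
    · rw [if_neg h2, if_pos hm]
      split_ifs with h3
      · exact (hT _ _ h3).le
      · exact le_rfl
  col_strict' {i1 i2 j} hj hm := by
    have h1 : (i1, j) ∈ ν := hs.ge _ _ (μ.up_left_mem hj le_rfl hm)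
    rw [if_pos h1, if_pos hm]
    split_ifs with h2
    · exact T.col_strict hj h2
    · exact hT _ _ h1
  zeros' hm := by
    rw [if_neg (fun h => hm (hs.le _ _ h)), if_neg hm]

lemma extn_apply {μ ν : YoungDiagram} {m : ℕ} (hs : Strip μ ν m) (T : SemistandardYoungTableau ν)
    (hT : T ∈ SS ν m) (i j : ℕ) :
    extn hs T hT i j = if (i, j) ∈ ν then T i j else if (i, j) ∈ μ then m else 0 := rfl

lemma fiber_card {μ ν : YoungDiagram} {m : ℕ} (hs : Strip μ ν m) :
    {T | T ∈ SS μ (m + 1) ∧ low T m = ν}.ncard = (SS ν m).ncard := by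
  have key : ∀ T : SemistandardYoungTableau μ, low T m = ν →
      ∀ i j, (i, j) ∈ ν ↔ (i, j) ∈ μ ∧ T i j < m := by
    intro T h i j
    rw [← h, mem_low]
  apply Set.ncard_congr (fun T _ => restr T hs.le)
  · rintro T ⟨hT, hl⟩ i j hm
    rw [restr_apply, if_pos hm]
    exact ((key T hl i j).1 hm).2
  · rintro T T' ⟨hT, hl⟩ ⟨hT', hl'⟩ he
    apply SemistandardYoungTableau.ext
    intro i j
    have e : restr T hs.le i j = restr T' hs.le i j := by rw [he]
    rw [restr_apply, restr_apply] at e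
    by_cases h1 : (i, j) ∈ ν
    · simpa [h1] using e
    · by_cases h2 : (i, j) ∈ μ
      · have a1 := mt (key T hl i j).2 h1
        have a2 := mt (key T' hl' i j).2 h1
        have a3 := hT _ _ h2
        have a4 := hT' _ _ h2
        simp only [h2, true_and] at a1 a2
        omega
      · rw [T.zeros h2, T'.zeros h2]
  · intro T hT
    refine ⟨extn hs T hT, ⟨?_, ?_⟩, ?_⟩
    · intro i j hm
      rw [extn_apply, if_pos hm]
      split_ifs with h
      · have := hT _ _ h; omega
      · omega
    · apply diag_ext
      intro i j
      rw [mem_low, extn_apply]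
      by_cases h : (i, j) ∈ ν
      · simp [h, hs.le _ _ h, hT _ _ h]
      · by_cases h2 : (i, j) ∈ μ <;> simp [h, h2]
    · apply SemistandardYoungTableau.ext
      intro i j
      rw [restr_apply, extn_apply]
      split_ifs with h
      · rfl
      · rw [T.zeros h]

/-- The diagram of a point `y` of the Gelfand-Tsetlin box. -/
def dia (μ : YoungDiagram) (m : ℕ) (y : ℕ → ℕ)
    (hy : ∀ i < m, av μ (m + 1) i ≤ y i ∧ y i < av μ (m + 1) (i + 1)) : YoungDiagram where
  cells := μ.cells.filter fun c => c.1 < m ∧ c.2 + (m - 1 - c.1) < y (m - 1 - c.1)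
  isLowerSet := by
    rintro ⟨a1, a2⟩ ⟨b1, b2⟩ ⟨h1, h2⟩ hb
    simp only [Finset.coe_filter, Set.mem_ofPred_eq, mem_cells] at *
    refine ⟨μ.up_left_mem h1 h2 hb.1, lt_of_le_of_lt h1 hb.2.1, ?_⟩
    rcases eq_or_lt_of_le h1 with e | e
    · subst e; have := hb.2.2; omega
    · have e1 := (hy (m - 1 - b1) (by omega)).1
      have e2 := (hy (m - 1 - a1) (by omega)).2
      have e3 := μ.rowLen_anti (b1 + 1) a1 e
      unfold av at e1 e2
      have e4 : m + 1 - 1 - (m - 1 - b1) = b1 + 1 := by omega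
      have e5 : m + 1 - 1 - (m - 1 - a1 + 1) = a1 := by omega
      rw [e4] at e1
      rw [e5] at e2
      omega

lemma rowLen_dia (μ : YoungDiagram) (m : ℕ) (y : ℕ → ℕ)
    (hy : ∀ i < m, av μ (m + 1) i ≤ y i ∧ y i < av μ (m + 1) (i + 1)) (i : ℕ) :
    (dia μ m y hy).rowLen i = if i < m then y (m - 1 - i) - (m - 1 - i) else 0 := by
  apply rowLen_eq_of
  intro j
  rw [← mem_cells]
  simp only [dia, mem_filter, mem_cells]
  split_ifs with h
  · have e2 := (hy (m - 1 - i) (by omega)).2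
    unfold av at e2
    have e5 : m + 1 - 1 - (m - 1 - i + 1) = i := by omega
    rw [e5] at e2
    rw [mem_iff_lt_rowLen]
    omega
  · omega

lemma av_dia (μ : YoungDiagram) (m : ℕ) (y : ℕ → ℕ)
    (hy : ∀ i < m, av μ (m + 1) i ≤ y i ∧ y i < av μ (m + 1) (i + 1)) (p : ℕ) (hp : p < m) :
    av (dia μ m y hy) m p = y p := by
  rw [av, rowLen_dia, if_pos (by omega)]
  have e : m - 1 - (m - 1 - p) = p := by omega
  have := (hy p hp).1
  unfold av at this
  rw [e]; omega

lemma strip_dia (μ : YoungDiagram) (m : ℕ) (hμ : μ.rowLen (m + 1) = 0) (y : ℕ → ℕ)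
    (hy : ∀ i < m, av μ (m + 1) i ≤ y i ∧ y i < av μ (m + 1) (i + 1)) :
    Strip μ (dia μ m y hy) m where
  le i j h := by
    rw [← mem_cells] at h
    simp only [dia, mem_filter, mem_cells] at h
    exact h.1
  ge i j h := by
    rw [mem_iff_lt_rowLen] at h ⊢
    have hi : i < m := by
      by_contra hc
      have := rowLen_zero_of_le hμ (i := i + 1) (by omega)
      omega
    rw [rowLen_dia, if_pos hi]
    have := (hy (m - 1 - i) (by omega)).1
    unfold av at this
    have e4 : m + 1 - 1 - (m - 1 - i) = i + 1 := by omega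
    rw [e4] at this
    omega
  rows := by rw [rowLen_dia]; simp

lemma strip_box {μ ν : YoungDiagram} {m : ℕ} (hs : Strip μ ν m) (p : ℕ) (hp : p < m) :
    av μ (m + 1) p ≤ av ν m p ∧ av ν m p < av μ (m + 1) (p + 1) := by
  unfold av
  have e1 : m + 1 - 1 - p = m - 1 - p + 1 := by omega
  have e2 : m + 1 - 1 - (p + 1) = m - 1 - p := by omega
  rw [e1, e2]
  constructor
  · have : μ.rowLen (m - 1 - p + 1) ≤ ν.rowLen (m - 1 - p) := by
      by_contra hc
      have := hs.ge _ _ (mem_iff_lt_rowLen.2 (not_le.1 hc))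
      rw [mem_iff_lt_rowLen] at this
      omega
    omega
  · have : ν.rowLen (m - 1 - p) ≤ μ.rowLen (m - 1 - p) := by
      by_contra hc
      have := hs.le _ _ (mem_iff_lt_rowLen.2 (not_le.1 hc))
      rw [mem_iff_lt_rowLen] at this
      omega
    omega

lemma strip_ext {μ ν ν' : YoungDiagram} {m : ℕ} (hs : Strip μ ν m) (hs' : Strip μ ν' m)
    (h : ∀ p < m, av ν m p = av ν' m p) : ν = ν' := by
  apply diag_ext_rowLen
  intro i
  by_cases hi : i < m
  · have := h (m - 1 - i) (by omega)
    unfold av at this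
    have e : m - 1 - (m - 1 - i) = i := by omega
    rw [e] at this
    omega
  · rw [rowLen_zero_of_le hs.rows (not_lt.1 hi), rowLen_zero_of_le hs'.rows (not_lt.1 hi)]

lemma av_strictMono (μ : YoungDiagram) (m : ℕ) : StrictMono (av μ m) :=
  strictMono_nat_of_lt_succ fun n => av_lt (Nat.lt_succ_self n)

open Matrix in
lemma ssyt_det (m : ℕ) : ∀ μ : YoungDiagram, μ.rowLen m = 0 →
    ((SS μ m).ncard : ℤ) = (of fun i j : Fin m => ((av μ m i).choose j : ℤ)).det := by
  induction m with
  | zero =>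
    intro μ h
    have hn : ∀ i j, (i, j) ∉ μ := by
      intro i j hm
      rw [mem_iff_lt_rowLen, rowLen_zero_of_le h (Nat.zero_le i)] at hm
      omega
    have : SS μ 0 = {default} := by
      ext T
      simp only [SS, Set.mem_ofPred_eq, Set.mem_singleton_iff]
      constructor
      · intro _
        apply SemistandardYoungTableau.ext
        intro i j
        rw [T.zeros (hn i j), SemistandardYoungTableau.zeros _ (hn i j)]
      · intro _ i j hm
        exact absurd hm (hn i j)
    rw [this]
    simp
  | succ m ih =>
    intro μ h
    rw [det_branch m _ (av_strictMono μ (m + 1))]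
    classical
    rw [Set.ncard_eq_toFinset_card _ (SS_finite μ (m + 1))]
    rw [Finset.card_eq_sum_card_fiberwise (f := fun T => fun i : Fin m => av (low T m) m i)
      (t := Fintype.piFinset (fun i : Fin m => Ico (av μ (m + 1) i) (av μ (m + 1) (i + 1))))]
    · push_cast
      apply Finset.sum_congr rfl
      intro y hy
      simp only [Fintype.mem_piFinset, mem_Ico] at hy
      let y' : ℕ → ℕ := fun i => if hi : i < m then y ⟨i, hi⟩ else 0
      have hyy : ∀ i : Fin m, y' i = y i := fun i => by simp [y']
      have hy' : ∀ i < m, av μ (m + 1) i ≤ y' i ∧ y' i < av μ (m + 1) (i + 1) := by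
        intro i hi
        have := hy ⟨i, hi⟩
        simpa [y', hi] using this
      have hs := strip_dia μ m h y' hy'
      have e := ih _ hs.rows
      have e2 : ∀ i : Fin m, av (dia μ m y' hy') m i = y i := fun i => by
        rw [av_dia _ _ _ _ _ i.2, hyy]
      simp only [e2] at e
      rw [← e, ← fiber_card hs, ← Set.ncard_coe_finset]
      congr 2
      ext T
      simp only [Finset.coe_filter, Set.Finite.mem_toFinset, Set.mem_ofPred_eq]
      apply and_congr_right
      intro hT
      constructor
      · intro h1
        apply strip_ext (strip_low hT) hs
        intro p hp
        rw [e2 ⟨p, hp⟩, ← h1]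
      · intro h1
        rw [h1]
        funext i
        exact e2 i
    · intro T hT
      simp only [Set.Finite.coe_toFinset] at hT
      simp only [Finset.mem_coe, Fintype.mem_piFinset, mem_Ico]
      exact fun i => strip_box (strip_low hT) i i.2

lemma ssyt_vd {m : ℕ} {μ : YoungDiagram} (h : μ.rowLen m = 0) :
    sfm m * ssytCount μ m = vd (av μ m) m := by
  have := det_choose_vd _ m (av_strictMono μ m)
  rw [← ssyt_det m μ h] at this
  exact_mod_cast this

end HookAux

/-- `H_λ · H_λ̄ · s_λ(1^m) · s_{λ'}(1^n) = H_{n^m}`. -/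
theorem hook_prod_ssyt_identity (m n : ℕ) (μ : YoungDiagram) (hμ : μ ≤ rect m n) :
    hookProd μ * hookProd (complement m n μ) * ssytCount μ m * ssytCount μ.transpose n
      = hookProd (rect m n) := by
  have h1 := HookAux.ssyt_vd (HookAux.rl_m hμ)
  have h2 := HookAux.ssyt_vd (HookAux.cl_n hμ)
  have h3 := HookAux.hook_formula (HookAux.cl_n hμ)
  have h4 := HookAux.compl_formula hμ
  have h5 := HookAux.fact_union hμ
  have h6 := HookAux.hook_rect m n
  rw [HookAux.hookProd_transpose, ← h2] at h3
  rw [← h1] at h4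
  rw [← h3, ← h4, ← h6] at h5
  have hp := Nat.mul_pos (HookAux.sfm_pos m) (HookAux.sfm_pos n)
  apply Nat.eq_of_mul_eq_mul_right hp
  linarith
end

section
/- For partitions λ, μ contained in the m×n rectangle, each with p boxes: dim S^λ(ℂ^m) · dim S^{λ'}(ℂ^n) · f^μ · f^{n^m/μ} = dim S^μ(ℂ^m) · dim S^{μ'}(ℂ^n) · f^λ · f^{n^m/λ}. -/
open YoungDiagram Finset

namespace CrossId

/-- Shifted row lengths, listed from the bottom row of an `m`-row frame. -/
def lvec (μ : YoungDiagram) (m : ℕ) (i : Fin m) : ℕ := μ.rowLen (m - 1 - i) + i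

/-- The determinant of falling factorials. -/
noncomputable def dF {m : ℕ} (l : Fin m → ℕ) : ℚ :=
  Matrix.det (Matrix.of fun i j : Fin m => ((l i).descFactorial j : ℚ))

/-- The determinant of binomials. -/
noncomputable def dC {m : ℕ} (l : Fin m → ℕ) : ℚ :=
  Matrix.det (Matrix.of fun i j : Fin m => ((l i).choose j : ℚ))

lemma dF_eq_dC {m : ℕ} (l : Fin m → ℕ) : dF l = (∏ j : Fin m, ((j : ℕ).factorial : ℚ)) * dC l := by
  unfold dF dC
  rw [← Matrix.det_mul_row]
  congr 1
  ext i j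
  simp [Nat.descFactorial_eq_factorial_mul_choose]

lemma dF_eq_prod {m : ℕ} (l : Fin m → ℕ) :
    dF l = ∏ i : Fin m, ∏ j ∈ Ioi i, ((l j : ℚ) - l i) := by
  rw [← Matrix.det_vandermonde]
  rw [Matrix.det_eval_matrixOfPolynomials_eq_det_vandermonde (fun i => (l i : ℚ))
    (fun j => descPochhammer ℚ j) (fun i => descPochhammer_natDegree ℚ i)
    (fun i => monic_descPochhammer ℚ i)]
  unfold dF
  congr 1
  ext i j
  simp [descPochhammer_eval_eq_descFactorial]

lemma dF_id (m : ℕ) : dF (fun i : Fin m => (i : ℕ)) = ∏ j : Fin m, ((j : ℕ).factorial : ℚ) := by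
  unfold dF
  rw [Matrix.det_of_isLowerTriangular]
  · simp [Nat.descFactorial_self]
  · intro i j hij
    simp only [Matrix.of_apply, Nat.cast_eq_zero]
    exact Nat.descFactorial_of_lt hij

lemma sum_det_updateRow {m : ℕ} (M : Matrix (Fin m) (Fin m) ℚ) (d : Fin m → ℚ) :
    ∑ i, Matrix.det (M.updateRow i fun j => d j * M i j) = (∑ j, d j) * M.det := by
  have h : ∀ i, Matrix.det (M.updateRow i fun j => d j * M i j)
      = ∑ σ : Equiv.Perm (Fin m), d (σ i) * ((Equiv.Perm.sign σ : ℤ) : ℚ) * ∏ k, M k (σ k) := by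
    intro i
    rw [← Matrix.det_transpose, Matrix.det_apply']
    refine Finset.sum_congr rfl fun σ _ => ?_
    have : ∏ k, (M.updateRow i fun j => d j * M i j).transpose (σ k) k
        = d (σ i) * ∏ k, M k (σ k) := by
      rw [← Finset.mul_prod_erase _ _ (Finset.mem_univ i),
        ← Finset.mul_prod_erase _ (fun k => M k (σ k)) (Finset.mem_univ i)]
      rw [← mul_assoc]
      congr 1
      · simp
      · refine Finset.prod_congr rfl fun k hk => ?_
        rw [Matrix.transpose_apply, Matrix.updateRow_ne (Finset.ne_of_mem_erase hk)]
    rw [this]; ring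
  simp_rw [h]
  rw [Finset.sum_comm, ← Matrix.det_transpose, Matrix.det_apply', Finset.mul_sum]
  refine Finset.sum_congr rfl fun σ _ => ?_
  simp_rw [mul_assoc]
  rw [← Finset.sum_mul, Equiv.sum_comp σ d]
  simp

lemma dF_update {m : ℕ} (l : Fin m → ℕ) :
    ∑ i, (l i : ℚ) * dF (Function.update l i (l i - 1))
      = ((∑ i, (l i : ℚ)) - ∑ j : Fin m, ((j : ℕ) : ℚ)) * dF l := by
  set M : Matrix (Fin m) (Fin m) ℚ := Matrix.of fun i j : Fin m => ((l i).descFactorial j : ℚ)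
    with hM
  have h : ∀ i, (l i : ℚ) * dF (Function.update l i (l i - 1))
      = (l i : ℚ) * M.det - Matrix.det (M.updateRow i fun j => ((j : ℕ) : ℚ) * M i j) := by
    intro i
    have h1 : dF (Function.update l i (l i - 1))
        = Matrix.det (M.updateRow i fun j => ((l i - 1).descFactorial j : ℚ)) := by
      unfold dF
      congr 1
      ext a b
      by_cases hab : a = i
      · subst hab; simp
      · simp [hab, hM]
    rw [h1, ← Matrix.det_updateRow_smul]
    have h2 : (l i : ℚ) * M.det = Matrix.det (M.updateRow i ((l i : ℚ) • M i)) := by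
      rw [Matrix.det_updateRow_smul, Matrix.updateRow_eq_self]
    rw [h2, eq_sub_iff_add_eq, ← Matrix.det_updateRow_add]
    congr 2
    ext j
    simp only [Pi.add_apply, Pi.smul_apply, smul_eq_mul, hM, Matrix.of_apply]
    rcases Nat.eq_zero_or_pos (l i) with h0 | h0
    · rw [h0]
      rcases Nat.eq_zero_or_pos (j : ℕ) with h3 | h3
      · simp [h3]
      · rw [Nat.descFactorial_of_lt h3]; simp
    · obtain ⟨t, ht⟩ : ∃ t, l i = t + 1 := ⟨l i - 1, by omega⟩
      rw [ht, Nat.add_sub_cancel]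
      have e1 : (t + 1) * t.descFactorial j = (t + 1).descFactorial (j + 1) :=
        (Nat.succ_descFactorial_succ t j).symm
      rw [Nat.descFactorial_succ] at e1
      rcases le_or_gt (j : ℕ) (t + 1) with h4 | h4
      · have : (((t + 1) * t.descFactorial j : ℕ) : ℚ) = (((t + 1 - j) * (t + 1).descFactorial j : ℕ) : ℚ) := by
          rw [e1]
        push_cast [Nat.cast_sub h4] at this ⊢
        linarith
      · rw [Nat.descFactorial_of_lt h4, Nat.descFactorial_of_lt (by omega)]; simp
  simp_rw [h]
  rw [Finset.sum_sub_distrib, sum_det_updateRow, ← Finset.sum_mul]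
  unfold dF
  ring

lemma sum_Ico_choose (a b j : ℕ) (h : a ≤ b) :
    ∑ x ∈ Ico a b, (x.choose j : ℚ) = (b.choose (j + 1) : ℚ) - a.choose (j + 1) := by
  induction b, h using Nat.le_induction with
  | base => simp
  | succ b hb ih =>
    rw [Finset.sum_Ico_succ_top hb, ih, Nat.choose_succ_succ b j]
    push_cast; ring

lemma dC_succ {k : ℕ} (l : Fin (k + 1) → ℕ) (hl : Monotone l) :
    dC l = ∑ x ∈ Fintype.piFinset (fun i : Fin k => Ico (l i.castSucc) (l i.succ)), dC x := by
  have h1 : ∑ x ∈ Fintype.piFinset (fun i : Fin k => Ico (l i.castSucc) (l i.succ)), dC x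
      = Matrix.det (Matrix.of fun i j : Fin k =>
        ((l i.succ).choose (j + 1) : ℚ) - (l i.castSucc).choose (j + 1)) := by
    have := (Matrix.detRowAlternating (R := ℚ) (n := Fin k)).toMultilinearMap.map_sum_finset
      (fun (i : Fin k) (x : ℕ) (j : Fin k) => (x.choose j : ℚ))
      (fun i : Fin k => Ico (l i.castSucc) (l i.succ))
    refine Eq.trans ?_ (this.symm.trans ?_)
    · rfl
    · change Matrix.det _ = Matrix.det _
      congr 1
      ext i j
      rw [Matrix.of_apply, ← sum_Ico_choose _ _ _ (hl (Fin.castSucc_lt_succ (i := i)).le)]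
      simp [Finset.sum_apply]
  rw [h1]
  unfold dC
  rw [Matrix.det_eq_of_forall_row_eq_smul_add_pred (B := Matrix.of fun i j : Fin (k + 1) =>
    (Fin.cases ((l 0).choose j : ℚ)
      (fun i => ((l i.succ).choose j : ℚ) - (l i.castSucc).choose j) i : ℚ)) (fun _ => 1)]
  · rw [Matrix.det_succ_column_zero, Fin.sum_univ_succ]
    simp
    congr 1
  · intro j; simp
  · intro i j; simp

end CrossId
namespace CrossId

lemma ncard_fiber {α β : Type*} [DecidableEq β] (s : Set α) (hs : s.Finite) (t : Finset β) (f : α → β)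
    (hf : ∀ a ∈ s, f a ∈ t) : s.ncard = ∑ b ∈ t, {a | a ∈ s ∧ f a = b}.ncard := by
  classical
  rw [Set.ncard_eq_toFinset_card s hs,
    Finset.card_eq_sum_card_fiberwise (f := f) (t := t) (by intro a ha; exact hf a (by simpa using ha))]
  refine Finset.sum_congr rfl fun b _ => ?_
  rw [← Set.ncard_coe_finset]
  congr 1
  ext a
  simp

lemma exists_diag (k : ℕ) (a : ℕ → ℕ) (ha : Antitone a) (h0 : a k = 0) :
    ∃ ν : YoungDiagram, ∀ r, ν.rowLen r = a r := by
  refine ⟨⟨(Finset.range k ×ˢ Finset.range (a 0)).filter fun p => p.2 < a p.1, ?_⟩, ?_⟩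
  · rintro ⟨a1, a2⟩ ⟨b1, b2⟩ ⟨h1, h2⟩ hb
    simp only [Finset.mem_coe, Finset.mem_filter, Finset.mem_product, Finset.mem_range] at *
    have := ha h1
    omega
  · intro r
    apply eq_of_forall_lt_iff
    intro c
    rw [← mem_iff_lt_rowLen, ← mem_cells]
    simp only [Finset.mem_filter, Finset.mem_product, Finset.mem_range]
    constructor
    · exact fun h => h.2
    · intro h
      have h1 := ha (Nat.zero_le r)
      refine ⟨⟨?_, by omega⟩, h⟩
      by_contra h2
      have := ha (not_lt.mp h2)
      omega

lemma rowLen_le_of {μ ν : YoungDiagram} {a b : ℕ} (h : ∀ j, (a, j) ∈ μ → (b, j) ∈ ν) :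
    μ.rowLen a ≤ ν.rowLen b := by
  by_contra! hc
  have := h _ (mem_iff_lt_rowLen.mpr hc)
  rw [mem_iff_lt_rowLen] at this
  omega

lemma diag_ext {μ ν : YoungDiagram} (h : ∀ r, μ.rowLen r = ν.rowLen r) : μ = ν := by
  ext ⟨i, j⟩
  rw [mem_cells, mem_cells, mem_iff_lt_rowLen, mem_iff_lt_rowLen, h]

lemma lvec_strictMono (μ : YoungDiagram) (m : ℕ) : StrictMono (lvec μ m) := by
  intro i j hij
  unfold lvec
  have h : (i : ℕ) < j := hij
  have := μ.rowLen_anti (m - 1 - j) (m - 1 - i) (by omega)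
  omega

lemma lvec_inj {μ ν : YoungDiagram} {k : ℕ} (hμ : μ.rowLen k = 0) (hν : ν.rowLen k = 0)
    (h : lvec μ k = lvec ν k) : μ = ν := by
  apply diag_ext
  intro r
  rcases lt_or_ge r k with hr | hr
  · have := congrFun h ⟨k - 1 - r, by omega⟩
    simp only [lvec] at this
    have e : k - 1 - (k - 1 - r) = r := by omega
    rw [e] at this
    omega
  · have h1 := μ.rowLen_anti k r hr
    have h2 := ν.rowLen_anti k r hr
    omega

lemma exists_lvec (k : ℕ) (x : Fin k → ℕ) (hx : StrictMono x) :
    ∃ ν : YoungDiagram, ν.rowLen k = 0 ∧ lvec ν k = x := by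
  have key : ∀ (d i : ℕ) (h : i + d < k), x ⟨i, by omega⟩ + d ≤ x ⟨i + d, h⟩ := by
    intro d
    induction d with
    | zero => intro i h; simp
    | succ d ih =>
      intro i h
      have h1 := ih i (by omega)
      have h2 : x ⟨i + d, by omega⟩ < x ⟨i + (d + 1), h⟩ := hx (by simp [Fin.lt_def])
      omega
  have key0 : ∀ i : Fin k, (i : ℕ) ≤ x i := by
    intro i
    have := key i 0 (by omega)
    simp only [zero_add, Fin.eta] at this
    omega
  obtain ⟨ν, hν⟩ := exists_diag k
    (fun r => if h : r < k then x ⟨k - 1 - r, by omega⟩ - (k - 1 - r) else 0) (by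
      intro r s hrs
      dsimp only
      split_ifs with h1 h2 h2
      · have := key (s - r) (k - 1 - s) (by omega)
        have e : k - 1 - s + (s - r) = k - 1 - r := by omega
        simp only [e] at this
        omega
      · omega
      · omega
      · omega) (by simp)
  refine ⟨ν, by simp [hν], ?_⟩
  funext i
  have hi := i.2
  have e : k - 1 - (k - 1 - (i : ℕ)) = i := by omega
  have := key0 i
  simp only [lvec, hν]
  rw [dif_pos (by omega)]
  simp only [e, Fin.eta]
  omega

/-- The cells of `T` with entry less than `k`. -/
def sub {μ : YoungDiagram} (T : SemistandardYoungTableau μ) (k : ℕ) : YoungDiagram where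
  cells := μ.cells.filter fun c => T c.1 c.2 < k
  isLowerSet := by
    rintro ⟨a1, a2⟩ ⟨b1, b2⟩ ⟨h1, h2⟩ hb
    simp only [Finset.mem_coe, Finset.mem_filter, mem_cells] at *
    change b1 ≤ a1 at h1
    change b2 ≤ a2 at h2
    have h3 : (b1, a2) ∈ μ := μ.up_left_mem h1 le_rfl hb.1
    refine ⟨μ.up_left_mem h1 h2 hb.1, ?_⟩
    have h4 := T.row_weak_of_le h2 h3
    have h5 := T.col_weak h1 hb.1
    omega

lemma mem_sub {μ : YoungDiagram} (T : SemistandardYoungTableau μ) (k i j : ℕ) :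
    (i, j) ∈ sub T k ↔ (i, j) ∈ μ ∧ T i j < k := by
  rw [← mem_cells, sub, Finset.mem_filter, mem_cells]

/-- The extension of a tableau of shape `ν` by the entries `k` on the rest of `μ`. -/
def extend {μ ν : YoungDiagram} (k : ℕ) (h1 : ∀ i, ν.rowLen i ≤ μ.rowLen i)
    (h2 : ∀ i, μ.rowLen (i + 1) ≤ ν.rowLen i) (S : SemistandardYoungTableau ν)
    (hS : ∀ i j, (i, j) ∈ ν → S i j < k) : SemistandardYoungTableau μ where
  entry i j := if (i, j) ∈ ν then S i j else if (i, j) ∈ μ then k else 0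
  row_weak' := by
    intro i j1 j2 hj hm
    have hm1 : (i, j1) ∈ μ := μ.up_left_mem le_rfl hj.le hm
    by_cases h3 : (i, j2) ∈ ν
    · have h4 : (i, j1) ∈ ν := ν.up_left_mem le_rfl hj.le h3
      simp only [h3, h4, if_true]
      exact S.row_weak hj h3
    · simp only [h3, hm, hm1, if_true, if_false]
      split_ifs with h4
      · exact (hS _ _ h4).le
      · exact le_rfl
  col_strict' := by
    intro i1 i2 j hi hm
    have h4 : (i1, j) ∈ ν := by
      rw [mem_iff_lt_rowLen] at hm ⊢
      have := h2 i1
      have := μ.rowLen_anti (i1 + 1) i2 hi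
      omega
    simp only [h4, if_true]
    split_ifs with h3
    · exact S.col_strict hi h3
    · exact hS _ _ h4
  zeros' := by
    intro i j hm
    have : (i, j) ∉ ν := by
      rw [mem_iff_lt_rowLen] at hm ⊢
      have := h1 i
      omega
    simp [hm, this]

lemma extend_apply {μ ν : YoungDiagram} (k : ℕ) (h1 : ∀ i, ν.rowLen i ≤ μ.rowLen i)
    (h2 : ∀ i, μ.rowLen (i + 1) ≤ ν.rowLen i) (S : SemistandardYoungTableau ν)
    (hS : ∀ i j, (i, j) ∈ ν → S i j < k) (i j : ℕ) :
    extend k h1 h2 S hS i j = if (i, j) ∈ ν then S i j else if (i, j) ∈ μ then k else 0 := rfl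

lemma ssyt_fiber (μ ν : YoungDiagram) (k : ℕ) (h1 : ∀ i, ν.rowLen i ≤ μ.rowLen i)
    (h2 : ∀ i, μ.rowLen (i + 1) ≤ ν.rowLen i) :
    {T : SemistandardYoungTableau μ | (∀ i j, (i, j) ∈ μ → T i j < k + 1) ∧ sub T k = ν}.ncard
      = ssytCount ν k := by
  symm
  unfold ssytCount
  have hsub : ∀ i j, (i, j) ∈ ν → (i, j) ∈ μ := by
    intro i j h
    rw [mem_iff_lt_rowLen] at h ⊢
    have := h1 i
    omega
  refine Set.ncard_congr (fun S hS => extend k h1 h2 S hS) ?_ ?_ ?_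
  · intro S hS
    refine ⟨?_, ?_⟩
    · intro i j hm
      rw [extend_apply]
      split_ifs with h3
      · exact (hS i j h3).trans (Nat.lt_add_one k)
      · omega
    · ext ⟨i, j⟩
      rw [mem_cells, mem_cells, mem_sub, extend_apply]
      constructor
      · rintro ⟨h3, h4⟩
        by_contra h5
        simp [h5, h3] at h4
      · intro h3
        refine ⟨hsub _ _ h3, ?_⟩
        rw [if_pos h3]
        exact hS i j h3
  · intro S S' hS hS' h
    ext i j
    by_cases h3 : (i, j) ∈ ν
    · have := congrArg (fun T : SemistandardYoungTableau μ => T i j) h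
      simpa [extend_apply, h3] using this
    · rw [S.zeros h3, S'.zeros h3]
  · rintro T ⟨hT, hTν⟩
    have hν : ∀ i j, (i, j) ∈ ν ↔ (i, j) ∈ μ ∧ T i j < k := by
      intro i j
      rw [← hTν, mem_sub]
    refine ⟨⟨fun i j => if (i, j) ∈ ν then T i j else 0, ?_, ?_, ?_⟩, ?_, ?_⟩
    · intro i j1 j2 hj hm
      rw [if_pos hm, if_pos (ν.up_left_mem le_rfl hj.le hm)]
      exact T.row_weak hj (hsub _ _ hm)
    · intro i1 i2 j hi hm
      rw [if_pos hm, if_pos (ν.up_left_mem hi.le le_rfl hm)]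
      exact T.col_strict hi (hsub _ _ hm)
    · intro i j hm
      rw [if_neg hm]
    · intro i j hm
      change (if (i, j) ∈ ν then T i j else 0) < k
      rw [if_pos hm]
      exact ((hν i j).mp hm).2
    · ext i j
      rw [extend_apply]
      change (if (i, j) ∈ ν then (if (i, j) ∈ ν then T i j else 0) else _) = _
      split_ifs with h3 h4
      · rfl
      · have := hT i j h4
        have := (hν i j).not.mp h3
        push Not at this
        have := this h4
        omega
      · exact (T.zeros h4).symm

lemma ssyt_finite (μ : YoungDiagram) (k : ℕ) :
    {T : SemistandardYoungTableau μ | ∀ i j, (i, j) ∈ μ → T i j < k}.Finite := by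
  let F : {T : SemistandardYoungTableau μ | ∀ i j, (i, j) ∈ μ → T i j < k} → (μ.cells → Fin k) :=
    fun T c => ⟨T.1 c.1.1 c.1.2, T.2 _ _ c.2⟩
  have : Function.Injective F := by
    intro T T' h
    apply Subtype.ext
    ext i j
    by_cases h3 : (i, j) ∈ μ
    · have := congrFun h ⟨(i, j), h3⟩
      simpa [F] using this
    · rw [T.1.zeros h3, T'.1.zeros h3]
  exact Finite.of_injective F this

lemma le_entry {μ : YoungDiagram} (T : SemistandardYoungTableau μ) (i j : ℕ) (h : (i, j) ∈ μ) :
    i ≤ T i j := by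
  induction i with
  | zero => exact Nat.zero_le _
  | succ i ih =>
    have := T.col_strict (Nat.lt_add_one i) h
    have := ih (μ.up_left_mem (Nat.le_succ i) le_rfl h)
    omega

lemma ssyt_dC (k : ℕ) : ∀ μ : YoungDiagram, μ.rowLen k = 0 →
    (ssytCount μ k : ℚ) = dC (lvec μ k) := by
  induction k with
  | zero =>
    intro μ hμ
    have h0 : ∀ i j, (i, j) ∉ μ := by
      intro i j h
      rw [mem_iff_lt_rowLen] at h
      have := μ.rowLen_anti 0 i (Nat.zero_le i)
      omega
    have : {T : SemistandardYoungTableau μ | ∀ i j, (i, j) ∈ μ → T i j < 0}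
        = {SemistandardYoungTableau.highestWeight μ} := by
      ext T
      simp only [Set.mem_ofPred_eq, Set.mem_singleton_iff]
      constructor
      · intro _
        ext i j
        rw [T.zeros (h0 i j), SemistandardYoungTableau.zeros _ (h0 i j)]
      · intro _ i j h
        exact absurd h (h0 i j)
    unfold ssytCount
    rw [this]
    simp [dC]
  | succ k ih =>
    intro μ hμ
    have hk : ∀ T : SemistandardYoungTableau μ, (sub T k).rowLen k = 0 := by
      intro T
      by_contra h
      have h1 : (k, 0) ∈ sub T k := mem_iff_lt_rowLen.mpr (Nat.pos_of_ne_zero h)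
      rw [mem_sub] at h1
      have := le_entry T k 0 h1.1
      omega
    rw [dC_succ _ (lvec_strictMono μ (k + 1)).monotone]
    unfold ssytCount
    rw [ncard_fiber _ (ssyt_finite μ (k + 1)) (Fintype.piFinset fun i : Fin k =>
      Finset.Ico (lvec μ (k + 1) i.castSucc) (lvec μ (k + 1) i.succ)) (fun T => lvec (sub T k) k)]
    · push_cast
      refine Finset.sum_congr rfl fun x hx => ?_
      rw [Fintype.mem_piFinset] at hx
      simp only [Finset.mem_Ico] at hx
      have hxm : StrictMono x := by
        intro i j hij
        have h1 := (hx i).2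
        have h2 := (hx j).1
        have h3 : lvec μ (k + 1) i.succ ≤ lvec μ (k + 1) j.castSucc :=
          (lvec_strictMono μ (k + 1)).monotone (by
            rw [Fin.le_def]; simp; exact hij)
        omega
      obtain ⟨ν, hν, rfl⟩ := exists_lvec k x hxm
      rw [← ih ν hν, ← ssyt_fiber μ ν k]
      · congr 2
        ext T
        simp only [Set.mem_ofPred_eq]
        refine and_congr_right fun _ => ⟨fun h => lvec_inj (hk T) hν h, fun h => by rw [h]⟩
      · intro r
        rcases lt_or_ge r k with hr | hr
        · have := (hx ⟨k - 1 - r, by omega⟩).2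
          simp only [lvec, Fin.val_succ] at this
          have e1 : k - 1 - (k - 1 - r) = r := by omega
          have e2 : k + 1 - 1 - (k - 1 - r + 1) = r := by omega
          rw [e1, e2] at this
          omega
        · have := ν.rowLen_anti k r hr
          omega
      · intro r
        rcases lt_or_ge r k with hr | hr
        · have := (hx ⟨k - 1 - r, by omega⟩).1
          simp only [lvec, Fin.val_castSucc] at this
          have e1 : k - 1 - (k - 1 - r) = r := by omega
          have e2 : k + 1 - 1 - (k - 1 - r) = r + 1 := by omega
          rw [e1, e2] at this
          omega
        · have := μ.rowLen_anti (k + 1) (r + 1) (by omega)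
          omega
    · intro T hT
      rw [Fintype.mem_piFinset]
      intro i
      have hi := i.2
      rw [Finset.mem_Ico]
      simp only [lvec, Fin.val_castSucc, Fin.val_succ]
      have e1 : k + 1 - 1 - (i : ℕ) = (k - 1 - i) + 1 := by omega
      have e2 : k + 1 - 1 - ((i : ℕ) + 1) = k - 1 - i := by omega
      rw [e1, e2]
      have a1 : (sub T k).rowLen (k - 1 - i) ≤ μ.rowLen (k - 1 - i) :=
        rowLen_le_of fun j h => ((mem_sub T k _ j).mp h).1
      have a2 : μ.rowLen (k - 1 - i + 1) ≤ (sub T k).rowLen (k - 1 - i) :=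
        rowLen_le_of fun j h => by
          rw [mem_sub]
          have b1 := T.col_strict (Nat.lt_add_one _) h
          have b2 := hT _ _ h
          exact ⟨μ.up_left_mem (Nat.le_succ _) le_rfl h, by omega⟩
      omega

end CrossId
namespace CrossId

lemma syt_finite (μ : YoungDiagram) : {T | IsSyt μ T}.Finite := by
  let F : {T | IsSyt μ T} → (μ.cells → Fin μ.card) :=
    fun T c => ⟨T.1 c.1, by simpa using T.2.1.mapsTo c.2⟩
  have : Function.Injective F := by
    intro T T' h
    apply Subtype.ext
    funext c
    by_cases h3 : c ∈ μ
    · have := congrFun h ⟨c, h3⟩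
      simpa [F] using this
    · rw [T.2.2.2.2 c h3, T'.2.2.2.2 c h3]
  exact Finite.of_injective F this

lemma syt_lt {μ : YoungDiagram} {T : ℕ × ℕ → ℕ} (hT : IsSyt μ T) {c : ℕ × ℕ} (hc : c ∈ μ) :
    T c < μ.card := by
  simpa using hT.1.mapsTo (show c ∈ (μ.cells : Set (ℕ × ℕ)) from hc)

lemma syt_inj {μ : YoungDiagram} {T : ℕ × ℕ → ℕ} (hT : IsSyt μ T) {c d : ℕ × ℕ} (hc : c ∈ μ)
    (hd : d ∈ μ) (h : T c = T d) : c = d :=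
  hT.1.injOn (show c ∈ (μ.cells : Set (ℕ × ℕ)) from hc)
    (show d ∈ (μ.cells : Set (ℕ × ℕ)) from hd) h

lemma syt_fiber (μ ν : YoungDiagram) (c : ℕ × ℕ) (hc : c ∈ μ) (hν : ν.cells = μ.cells.erase c) :
    {T | IsSyt μ T ∧ T c + 1 = μ.card}.ncard = sytCount ν := by
  have hmem : ∀ d, d ∈ ν ↔ d ≠ c ∧ d ∈ μ := by
    intro d
    rw [← mem_cells, hν, Finset.mem_erase, mem_cells]
  have hcν : c ∉ ν := by simp [hmem]
  have hcard : μ.card = ν.card + 1 := by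
    unfold YoungDiagram.card
    rw [hν, Finset.card_erase_add_one]
    exact hc
  have hins : (μ.cells : Set (ℕ × ℕ)) = insert c (ν.cells : Set (ℕ × ℕ)) := by
    rw [hν, ← Finset.coe_insert, Finset.insert_erase]
    exact hc
  have hrow : ∀ i j, (i, j + 1) ∈ μ → (i, j) ∈ ν := by
    intro i j h
    rw [hmem]
    refine ⟨?_, μ.up_left_mem le_rfl (Nat.le_succ j) h⟩
    rintro rfl
    have h1 : (i, j + 1) ∈ ν := by rw [hmem]; exact ⟨by simp, h⟩
    exact hcν (ν.up_left_mem le_rfl (Nat.le_succ j) h1)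
  have hcol : ∀ i j, (i + 1, j) ∈ μ → (i, j) ∈ ν := by
    intro i j h
    rw [hmem]
    refine ⟨?_, μ.up_left_mem (Nat.le_succ i) le_rfl h⟩
    rintro rfl
    have h1 : (i + 1, j) ∈ ν := by rw [hmem]; exact ⟨by simp, h⟩
    exact hcν (ν.up_left_mem (Nat.le_succ i) le_rfl h1)
  have hne : ∀ d, d ∈ ν → d ≠ c := fun d h => ((hmem d).mp h).1
  symm
  unfold sytCount
  refine Set.ncard_congr (fun S _ => Function.update S c ν.card) ?_ ?_ ?_
  · intro S hS
    have step : ∀ d e, d ∈ ν → e ∈ μ → (e ∈ ν → S d < S e) →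
        Function.update S c ν.card d < Function.update S c ν.card e := by
      intro d e hd he h
      rw [Function.update_of_ne (hne d hd)]
      by_cases hec : e = c
      · rw [hec, Function.update_self]
        exact syt_lt hS hd
      · rw [Function.update_of_ne hec]
        exact h ((hmem e).mpr ⟨hec, he⟩)
    refine ⟨⟨?_, ?_, ?_, ?_⟩, ?_⟩
    · have h1 : Set.BijOn (Function.update S c ν.card) (ν.cells : Set (ℕ × ℕ))
          (Finset.range ν.card : Set ℕ) := by
        refine hS.1.congr fun d hd => ?_
        rw [Function.update_of_ne (hne d hd)]
      have h2 := h1.insert (a := c) (by simp)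
      rw [hins, hcard, Finset.range_add_one, Finset.coe_insert]
      simpa using h2
    · intro i j h
      exact step _ _ (hrow i j h) h fun h' => hS.2.1 i j h'
    · intro i j h
      exact step _ _ (hcol i j h) h fun h' => hS.2.2.1 i j h'
    · intro d hd
      have hdc : d ≠ c := by rintro rfl; exact hd hc
      rw [Function.update_of_ne hdc]
      exact hS.2.2.2 d fun h => hd ((hmem d).mp h).2
    · rw [Function.update_self, hcard]
  · intro S S' hS hS' h
    funext d
    by_cases hdc : d = c
    · rw [hdc, hS.2.2.2 c hcν, hS'.2.2.2 c hcν]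
    · have := congrFun h d
      simpa [Function.update_of_ne hdc] using this
  · rintro T ⟨hT, hTc⟩
    have hTc' : T c = ν.card := by omega
    refine ⟨Function.update T c 0, ⟨⟨?_, ?_, ?_⟩, ?_, ?_, ?_⟩, ?_⟩
    · intro d hd
      have hd' : d ∈ ν := hd
      rw [Function.update_of_ne (hne d hd')]
      have h1 := ((hmem d).mp hd')
      have h2 := syt_lt hT h1.2
      have h3 : T d ≠ T c := fun h => h1.1 (syt_inj hT h1.2 hc h)
      simp only [Finset.coe_range, Set.mem_Iio]
      omega
    · intro d hd e he h
      have hd' : d ∈ ν := hd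
      have he' : e ∈ ν := he
      rw [Function.update_of_ne (hne d hd'), Function.update_of_ne (hne e he')] at h
      exact syt_inj hT ((hmem d).mp hd').2 ((hmem e).mp he').2 h
    · intro y hy
      simp only [Finset.coe_range, Set.mem_Iio] at hy
      obtain ⟨d, hd, hdy⟩ := hT.1.surjOn (show y ∈ (Finset.range μ.card : Set ℕ) by
        simp only [Finset.coe_range, Set.mem_Iio]; omega)
      have hdc : d ≠ c := by rintro rfl; omega
      exact ⟨d, (hmem d).mpr ⟨hdc, hd⟩, by rw [Function.update_of_ne hdc]; exact hdy⟩
    · intro i j h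
      have h1 := ((hmem _).mp h)
      rw [Function.update_of_ne (hne _ (hrow i j h1.2)), Function.update_of_ne h1.1]
      exact hT.2.1 i j h1.2
    · intro i j h
      have h1 := ((hmem _).mp h)
      rw [Function.update_of_ne (hne _ (hcol i j h1.2)), Function.update_of_ne h1.1]
      exact hT.2.2.1 i j h1.2
    · intro d hd
      by_cases hdc : d = c
      · rw [hdc, Function.update_self]
      · rw [Function.update_of_ne hdc]
        exact hT.2.2.2 d fun h => hd ((hmem d).mpr ⟨hdc, h⟩)
    · change Function.update (Function.update T c 0) c ν.card = T
      rw [Function.update_idem, ← hTc', Function.update_eq_self]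

lemma card_eq_sum (μ : YoungDiagram) (m : ℕ) (hm : μ.rowLen m = 0) :
    μ.card = ∑ r ∈ Finset.range m, μ.rowLen r := by
  unfold YoungDiagram.card
  rw [Finset.card_eq_sum_card_fiberwise (f := Prod.fst) (t := Finset.range m)]
  · refine Finset.sum_congr rfl fun r _ => ?_
    rw [rowLen_eq_card, row]
  · rintro ⟨i, j⟩ h
    have h' : (i, j) ∈ μ := h
    rw [mem_iff_lt_rowLen] at h'
    simp only [Finset.coe_range, Set.mem_Iio]
    by_contra h2
    have := μ.rowLen_anti m i (not_lt.mp h2)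
    omega

lemma sum_lvec (μ : YoungDiagram) (m : ℕ) (hm : μ.rowLen m = 0) :
    (∑ i, (lvec μ m i : ℚ)) - ∑ j : Fin m, ((j : ℕ) : ℚ) = μ.card := by
  rw [card_eq_sum μ m hm, ← Finset.sum_range_reflect, ← Finset.sum_sub_distrib]
  push_cast
  rw [← Fin.sum_univ_eq_sum_range (fun i => (μ.rowLen (m - 1 - i) : ℚ)) m]
  refine Finset.sum_congr rfl fun i _ => ?_
  simp [lvec]

/-- The last cell of the row with (bottom-up) index `i`. -/
def lastCell (μ : YoungDiagram) (m : ℕ) (i : Fin m) : ℕ × ℕ :=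
  (m - 1 - i, μ.rowLen (m - 1 - i) - 1)

lemma top_exists {μ : YoungDiagram} {m : ℕ} (hm : μ.rowLen m = 0) (h0 : 0 < μ.card)
    {T : ℕ × ℕ → ℕ} (hT : IsSyt μ T) :
    ∃ i : Fin m, lastCell μ m i ∈ μ ∧ T (lastCell μ m i) + 1 = μ.card := by
  obtain ⟨⟨r, s⟩, hd, hdy⟩ := hT.1.surjOn (show μ.card - 1 ∈ (Finset.range μ.card : Set ℕ) by
        simp only [Finset.coe_range, Set.mem_Iio]; omega)
  have hd' : (r, s) ∈ μ := hd
  have h1 : (r, s + 1) ∉ μ := by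
    intro h
    have a := hT.2.1 r s h
    have b := syt_lt hT h
    omega
  rw [mem_iff_lt_rowLen] at h1
  have h2 := mem_iff_lt_rowLen.mp hd'
  have hr : r < m := by
    by_contra h
    have := μ.rowLen_anti m r (not_lt.mp h)
    omega
  have e : lastCell μ m ⟨m - 1 - r, by omega⟩ = (r, s) := by
    have e1 : m - 1 - (m - 1 - r) = r := by omega
    simp only [lastCell, e1, Prod.mk.injEq, true_and]
    omega
  refine ⟨⟨m - 1 - r, by omega⟩, ?_⟩
  rw [e]
  exact ⟨hd', by omega⟩

lemma lastCell_inj {μ : YoungDiagram} {m : ℕ} {i j : Fin m}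
    (h : lastCell μ m i = lastCell μ m j) : i = j := by
  simp only [lastCell, Prod.mk.injEq] at h
  have hi := i.2
  have hj := j.2
  apply Fin.ext
  omega

lemma syt_sum (μ : YoungDiagram) (m : ℕ) (hm : μ.rowLen m = 0) (h0 : 0 < μ.card) :
    sytCount μ = ∑ i : Fin m, {T | IsSyt μ T ∧
      (lastCell μ m i ∈ μ ∧ T (lastCell μ m i) + 1 = μ.card)}.ncard := by
  classical
  have hex : ∀ T, IsSyt μ T → ∃ i : Fin m, lastCell μ m i ∈ μ ∧ T (lastCell μ m i) + 1 = μ.card :=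
    fun T hT => top_exists hm h0 hT
  by_cases hm0 : Nonempty (Fin m)
  · have : ∀ T, ∃ i : Fin m, IsSyt μ T →
        lastCell μ m i ∈ μ ∧ T (lastCell μ m i) + 1 = μ.card := by
      intro T
      by_cases hT : IsSyt μ T
      · obtain ⟨i, hi⟩ := hex T hT
        exact ⟨i, fun _ => hi⟩
      · exact ⟨hm0.some, fun h => absurd h hT⟩
    choose f hf using this
    unfold sytCount
    rw [ncard_fiber _ (syt_finite μ) Finset.univ f (fun _ _ => Finset.mem_univ _)]
    refine Finset.sum_congr rfl fun i _ => ?_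
    congr 1
    ext T
    simp only [Set.mem_ofPred_eq]
    refine and_congr_right fun hT => ⟨fun h => h ▸ hf T hT, fun h => ?_⟩
    apply lastCell_inj (μ := μ)
    have h2 := hf T hT
    exact syt_inj hT h2.1 h.1 (by omega)
  · exfalso
    have : m = 0 := by
      by_contra h
      exact hm0 ⟨⟨0, Nat.pos_of_ne_zero h⟩⟩
    subst this
    rw [card_eq_sum μ 0 hm] at h0
    simp at h0

lemma syt_dF (m p : ℕ) : ∀ μ : YoungDiagram, μ.rowLen m = 0 → μ.card = p →
    (sytCount μ : ℚ) * ∏ i, ((lvec μ m i).factorial : ℚ) = p.factorial * dF (lvec μ m) := by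
  induction p with
  | zero =>
    intro μ hm hp
    have hcells : μ.cells = ∅ := Finset.card_eq_zero.mp hp
    have hnot : ∀ c, c ∉ μ := by
      intro c
      rw [← mem_cells, hcells]
      simp
    have h1 : lvec μ m = fun i : Fin m => (i : ℕ) := by
      funext i
      have : μ.rowLen (m - 1 - i) = 0 := by
        by_contra h
        exact hnot _ (mem_iff_lt_rowLen.mpr (Nat.pos_of_ne_zero h))
      simp [lvec, this]
    have h2 : {T | IsSyt μ T} = {fun _ => 0} := by
      ext T
      simp only [Set.mem_ofPred_eq, Set.mem_singleton_iff]
      constructor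
      · intro h
        funext c
        exact h.2.2.2 c (hnot c)
      · rintro rfl
        refine ⟨?_, fun i j h => absurd h (hnot _), fun i j h => absurd h (hnot _), fun _ _ => rfl⟩
        rw [hp, hcells]
        simp
    unfold sytCount
    rw [h2, h1, dF_id]
    simp
  | succ p ih =>
    intro μ hm hp
    rw [syt_sum μ m hm (by omega)]
    have hs := dF_update (lvec μ m)
    rw [sum_lvec μ m hm, hp] at hs
    have : ((p + 1).factorial : ℚ) * dF (lvec μ m)
        = p.factorial * (((p + 1 : ℕ) : ℚ) * dF (lvec μ m)) := by
      rw [Nat.factorial_succ]; push_cast; ring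
    rw [this, ← hs, Finset.mul_sum]
    push_cast
    rw [Finset.sum_mul]
    refine Finset.sum_congr rfl fun i _ => ?_
    have hi := i.2
    by_cases hv : μ.rowLen (m - 1 - i + 1) < μ.rowLen (m - 1 - i)
    · have hc : lastCell μ m i ∈ μ := by
        simp only [lastCell, mem_iff_lt_rowLen]
        omega
      obtain ⟨ν, hν⟩ : ∃ ν : YoungDiagram, ν.cells = μ.cells.erase (lastCell μ m i) := by
        refine ⟨⟨μ.cells.erase (lastCell μ m i), ?_⟩, rfl⟩
        rintro ⟨a1, a2⟩ ⟨b1, b2⟩ ⟨h1, h2⟩ hb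
        change b1 ≤ a1 at h1
        change b2 ≤ a2 at h2
        simp only [Finset.mem_coe, Finset.mem_erase, mem_cells, lastCell, ne_eq,
          Prod.mk.injEq] at *
        refine ⟨?_, μ.up_left_mem h1 h2 hb.2⟩
        rintro ⟨rfl, rfl⟩
        have h3 := mem_iff_lt_rowLen.mp hb.2
        rcases Nat.eq_or_lt_of_le h1 with h4 | h4
        · apply hb.1
          refine ⟨h4.symm, ?_⟩
          rw [← h4] at h3
          omega
        · have := μ.rowLen_anti _ _ (Nat.succ_le_of_lt h4)
          simp only [Nat.succ_eq_add_one] at this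
          omega
      have hcard : μ.card = ν.card + 1 := by
        unfold YoungDiagram.card
        rw [hν, Finset.card_erase_add_one]
        exact hc
      have hrl : ∀ r, ν.rowLen r = if r = m - 1 - i then μ.rowLen r - 1 else μ.rowLen r := by
        intro r
        apply eq_of_forall_lt_iff
        intro s
        rw [← mem_iff_lt_rowLen, ← mem_cells, hν, Finset.mem_erase, mem_cells, mem_iff_lt_rowLen]
        simp only [lastCell, ne_eq, Prod.mk.injEq]
        split_ifs with h
        · subst h
          simp only [true_and]
          omega
        · simp [h]
      have hνm : ν.rowLen m = 0 := by
        rw [hrl, if_neg (by omega), hm]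
      have hl : lvec ν m = Function.update (lvec μ m) i (lvec μ m i - 1) := by
        funext j
        have hj := j.2
        by_cases hji : j = i
        · subst hji
          rw [Function.update_self]
          simp only [lvec, hrl, if_true]
          omega
        · rw [Function.update_of_ne hji]
          have : (j : ℕ) ≠ i := fun h => hji (Fin.ext h)
          simp only [lvec, hrl]
          rw [if_neg (by omega)]
      have hfib : {T | IsSyt μ T ∧ (lastCell μ m i ∈ μ ∧ T (lastCell μ m i) + 1 = μ.card)}.ncard
          = sytCount ν := by
        rw [← syt_fiber μ ν (lastCell μ m i) hc hν]
        congr 1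
        ext T
        simp [hc]
      rw [hfib]
      have hIH := ih ν hνm (by omega)
      rw [hl] at hIH
      have hpos : 0 < lvec μ m i := by simp only [lvec]; omega
      have hprod : ∏ j, ((lvec μ m j).factorial : ℚ) = (lvec μ m i : ℚ) *
          ∏ j, ((Function.update (lvec μ m) i (lvec μ m i - 1) j).factorial : ℚ) := by
        rw [← Finset.mul_prod_erase _ _ (Finset.mem_univ i),
          ← Finset.mul_prod_erase (Finset.univ) (fun j =>
            ((Function.update (lvec μ m) i (lvec μ m i - 1) j).factorial : ℚ)) (Finset.mem_univ i),
          ← mul_assoc]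
        congr 1
        · rw [Function.update_self, ← Nat.mul_factorial_pred hpos.ne']
          push_cast; ring
        · refine Finset.prod_congr rfl fun j hj => ?_
          rw [Function.update_of_ne (Finset.ne_of_mem_erase hj)]
      rw [hprod]
      linear_combination (lvec μ m i : ℚ) * hIH
    · have hempty : {T | IsSyt μ T ∧ (lastCell μ m i ∈ μ ∧ T (lastCell μ m i) + 1 = μ.card)} = ∅ := by
        rw [Set.eq_empty_iff_forall_notMem]
        rintro T ⟨hT, hc, hTc⟩
        have hc' := hc
        simp only [lastCell, mem_iff_lt_rowLen] at hc'
        have h1 : (m - 1 - (i : ℕ) + 1, μ.rowLen (m - 1 - i) - 1) ∈ μ := by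
          rw [mem_iff_lt_rowLen]
          omega
        have h2 := hT.2.2.1 _ _ h1
        have h3 := syt_lt hT h1
        simp only [lastCell] at hTc
        omega
      rw [hempty]
      have hz : (lvec μ m i : ℚ) * dF (Function.update (lvec μ m) i (lvec μ m i - 1)) = 0 := by
        rcases Nat.eq_zero_or_pos (i : ℕ) with hi0 | hi0
        · have : lvec μ m i = 0 := by
            have e : m - 1 - (i : ℕ) + 1 = m := by omega
            rw [e] at hv
            simp only [lvec]
            omega
          rw [this]; simp
        · have hlt : (i : ℕ) - 1 < m := by omega
          have hne : i ≠ ⟨i - 1, hlt⟩ := by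
            intro h
            have := congrArg Fin.val h
            simp only at this
            omega
          have heq : lvec μ m i - 1 = lvec μ m ⟨i - 1, hlt⟩ := by
            have := μ.rowLen_anti (m - 1 - i) (m - 1 - i + 1) (by omega)
            have e : m - 1 - ((i : ℕ) - 1) = m - 1 - i + 1 := by omega
            simp only [lvec, e]
            omega
          have : dF (Function.update (lvec μ m) i (lvec μ m i - 1)) = 0 := by
            unfold dF
            apply Matrix.det_zero_of_row_eq hne
            funext j
            simp only [Matrix.of_apply]
            rw [Function.update_self, Function.update_of_ne hne.symm, heq]
          rw [this, mul_zero]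
      rw [hz]
      simp

end CrossId
namespace CrossId

/-- The positive part of the difference, as a factor. -/
def gg (a b : ℕ) : ℚ := if a < b then (b : ℚ) - a else 1

/-- The Vandermonde product of a finite set. -/
def dS (A : Finset ℕ) : ℚ := ∏ a ∈ A, ∏ b ∈ A, gg a b

/-- The set of shifted row lengths. -/
def lset (μ : YoungDiagram) (m : ℕ) : Finset ℕ := Finset.univ.image (lvec μ m)

lemma dF_eq_dS (μ : YoungDiagram) (m : ℕ) : dF (lvec μ m) = dS (lset μ m) := by
  have hl := lvec_strictMono μ m
  unfold dS lset
  rw [dF_eq_prod, Finset.prod_image hl.injective.injOn]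
  refine Finset.prod_congr rfl fun i _ => ?_
  rw [Finset.prod_image hl.injective.injOn]
  unfold gg
  rw [Finset.prod_ite]
  simp only [Finset.prod_const_one, mul_one]
  refine Finset.prod_congr ?_ fun _ _ => rfl
  ext j
  simp [hl.lt_iff_lt]

lemma dS_pos (A : Finset ℕ) : 0 < dS A := by
  refine Finset.prod_pos fun a _ => Finset.prod_pos fun b _ => ?_
  unfold gg
  split_ifs with h
  · have : (a : ℚ) < b := by exact_mod_cast h
    linarith
  · exact one_pos

lemma refl_inj {N : ℕ} {A : Finset ℕ} (hA : A ⊆ Finset.range N) :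
    Set.InjOn (fun a => N - 1 - a) (A : Set ℕ) := by
  intro a ha b hb h
  have h1 := Finset.mem_range.mp (hA ha)
  have h2 := Finset.mem_range.mp (hA hb)
  simp only at h
  omega

lemma dS_refl (N : ℕ) (A : Finset ℕ) (hA : A ⊆ Finset.range N) :
    dS (A.image fun a => N - 1 - a) = dS A := by
  unfold dS
  rw [Finset.prod_image (refl_inj hA), Finset.prod_comm]
  rw [Finset.prod_image (refl_inj hA)]
  refine Finset.prod_congr rfl fun a ha => Finset.prod_congr rfl fun b hb => ?_
  have h1 := Finset.mem_range.mp (hA ha)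
  have h2 := Finset.mem_range.mp (hA hb)
  unfold gg
  have e : N - 1 - b < N - 1 - a ↔ a < b := by omega
  simp only [e]
  split_ifs with h
  · have e1 : ((N - 1 - a : ℕ) : ℚ) = (N : ℚ) - 1 - a := by
      rw [Nat.cast_sub (by omega), Nat.cast_sub (by omega)]; simp
    have e2 : ((N - 1 - b : ℕ) : ℚ) = (N : ℚ) - 1 - b := by
      rw [Nat.cast_sub (by omega), Nat.cast_sub (by omega)]; simp
    rw [e1, e2]; ring
  · rfl

lemma prod_gg_right (a d : ℕ) : ∏ x ∈ Finset.range (a + 1 + d), gg a x = (d.factorial : ℚ) := by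
  induction d with
  | zero =>
    rw [add_zero, Nat.factorial_zero, Nat.cast_one]
    refine Finset.prod_eq_one fun x hx => ?_
    have := Finset.mem_range.mp hx
    unfold gg
    rw [if_neg (by omega)]
  | succ d ih =>
    rw [← add_assoc, Finset.prod_range_succ, ih, Nat.factorial_succ]
    unfold gg
    rw [if_pos (by omega)]
    push_cast
    ring

lemma prod_gg_left (a d : ℕ) : ∏ x ∈ Finset.range (a + 1 + d), gg x a = (a.factorial : ℚ) := by
  rw [add_assoc, Finset.prod_range_add]
  have h2 : ∏ x ∈ Finset.range (1 + d), gg (a + x) a = 1 := by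
    refine Finset.prod_eq_one fun x _ => ?_
    unfold gg
    rw [if_neg (by omega)]
  rw [h2, mul_one, ← Finset.prod_range_reflect, ← Finset.prod_range_add_one_eq_factorial]
  push_cast
  refine Finset.prod_congr rfl fun x hx => ?_
  have := Finset.mem_range.mp hx
  unfold gg
  rw [if_pos (by omega), Nat.cast_sub (by omega), Nat.cast_sub (by omega)]
  push_cast
  ring

lemma dS_compl (N : ℕ) (A : Finset ℕ) (hA : A ⊆ Finset.range N) :
    dS (Finset.range N \ A) *
      ((∏ a ∈ A, (a.factorial : ℚ)) * ∏ a ∈ A, ((N - 1 - a).factorial : ℚ))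
      = dS A * dS (Finset.range N) := by
  have split : ∀ f : ℕ → ℚ, ∏ x ∈ Finset.range N, f x
      = (∏ x ∈ Finset.range N \ A, f x) * ∏ x ∈ A, f x := fun f =>
    (Finset.prod_sdiff hA).symm
  have e1 : ∏ a ∈ A, (a.factorial : ℚ) = ∏ a ∈ A, ∏ x ∈ Finset.range N, gg x a := by
    refine Finset.prod_congr rfl fun a ha => ?_
    have := Finset.mem_range.mp (hA ha)
    obtain ⟨d, rfl⟩ : ∃ d, N = a + 1 + d := ⟨N - (a + 1), by omega⟩
    rw [prod_gg_left]
  have e2 : ∏ a ∈ A, ((N - 1 - a).factorial : ℚ) = ∏ a ∈ A, ∏ x ∈ Finset.range N, gg a x := by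
    refine Finset.prod_congr rfl fun a ha => ?_
    have := Finset.mem_range.mp (hA ha)
    obtain ⟨d, rfl⟩ : ∃ d, N = a + 1 + d := ⟨N - (a + 1), by omega⟩
    rw [prod_gg_right]
    congr 2
    omega
  rw [e1, e2]
  unfold dS
  simp only [split, Finset.prod_mul_distrib]
  rw [Finset.prod_comm (s := A) (t := Finset.range N \ A) (f := fun a x => gg x a),
    Finset.prod_comm (s := A) (t := A) (f := fun a x => gg x a)]
  ring

lemma rect_rowLen {m n : ℕ} {μ : YoungDiagram} (h : μ ≤ rect m n) :
    μ.rowLen m = 0 ∧ μ.colLen n = 0 ∧ (∀ i, μ.rowLen i ≤ n) ∧ ∀ j, μ.colLen j ≤ m := by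
  have key : ∀ i j, (i, j) ∈ μ → i < m ∧ j < n := by
    intro i j hij
    have h1 : (i, j) ∈ (rect m n).cells := h hij
    simpa [rect] using h1
  refine ⟨?_, ?_, ?_, ?_⟩
  · by_contra hc
    have := key m 0 (mem_iff_lt_rowLen.mpr (by omega))
    omega
  · by_contra hc
    have := key 0 n (mem_iff_lt_colLen.mpr (by omega))
    omega
  · intro i
    by_contra! hc
    have := key i n (mem_iff_lt_rowLen.mpr hc)
    omega
  · intro j
    by_contra! hc
    have := key m j (mem_iff_lt_colLen.mpr hc)
    omega

lemma complement_rowLen (m n : ℕ) (μ : YoungDiagram) (i : ℕ) :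
    (complement m n μ).rowLen i = if i < m then n - μ.rowLen (m - 1 - i) else 0 := by
  apply eq_of_forall_lt_iff
  intro c
  rw [← mem_iff_lt_rowLen, ← mem_cells]
  simp only [complement, Finset.mem_filter, Finset.mem_product, Finset.mem_range]
  split_ifs with h <;> omega

lemma lset_subset {m n : ℕ} {μ : YoungDiagram} (h : ∀ i, μ.rowLen i ≤ n) :
    lset μ m ⊆ Finset.range (m + n) := by
  intro a ha
  simp only [lset, Finset.mem_image, Finset.mem_univ, true_and] at ha
  obtain ⟨i, rfl⟩ := ha
  have hi := i.2
  have := h (m - 1 - i)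
  simp only [lvec, Finset.mem_range]
  omega

lemma lset_card (μ : YoungDiagram) (m : ℕ) : (lset μ m).card = m := by
  unfold lset
  rw [Finset.card_image_of_injective _ (lvec_strictMono μ m).injective]
  simp

lemma lset_complement {m n : ℕ} {μ : YoungDiagram} (h : μ ≤ rect m n) :
    lset (complement m n μ) m = (lset μ m).image fun a => m + n - 1 - a := by
  unfold lset
  rw [Finset.image_image]
  have e : lvec (complement m n μ) m = ((fun a => m + n - 1 - a) ∘ lvec μ m) ∘ Fin.rev := by
    funext i
    have hi := i.2
    have := (rect_rowLen h).2.2.1 i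
    simp only [lvec, Function.comp, complement_rowLen, Fin.val_rev]
    have e1 : m - 1 - (m - 1 - (i : ℕ)) = i := by omega
    have e2 : m - 1 - (m - ((i : ℕ) + 1)) = i := by omega
    rw [if_pos (by omega), e1, e2]
    omega
  rw [e, ← Finset.image_image, Finset.image_univ_of_surjective Fin.rev_surjective]

lemma dS_transpose {m n : ℕ} {μ : YoungDiagram} (h : μ ≤ rect m n) :
    dS (lset μ.transpose n) = dS (Finset.range (m + n) \ lset μ m) := by
  obtain ⟨h1, h2, h3, h4⟩ := rect_rowLen h
  have hs : lset μ.transpose n ⊆ Finset.range (m + n) := by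
    rw [add_comm]
    exact lset_subset fun i => by rw [rowLen_transpose]; exact h4 i
  rw [← dS_refl (m + n) _ hs]
  congr 1
  apply Finset.eq_of_subset_of_card_le
  · intro a ha
    simp only [lset, Finset.mem_image, Finset.mem_univ, true_and] at ha
    obtain ⟨b, ⟨i, rfl⟩, rfl⟩ := ha
    have hi := i.2
    have hc := h4 (n - 1 - i)
    rw [Finset.mem_sdiff, Finset.mem_range]
    refine ⟨by omega, ?_⟩
    simp only [lset, Finset.mem_image, Finset.mem_univ, true_and, not_exists]
    intro j
    have hj := j.2
    simp only [lvec, rowLen_transpose]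
    by_cases hm : (m - 1 - (j : ℕ), n - 1 - (i : ℕ)) ∈ μ
    · have a1 := mem_iff_lt_rowLen.mp hm
      have a2 := mem_iff_lt_colLen.mp hm
      omega
    · have a1 := mem_iff_lt_rowLen.not.mp hm
      have a2 := mem_iff_lt_colLen.not.mp hm
      omega
  · rw [Finset.card_image_of_injOn (refl_inj hs), lset_card,
      Finset.card_sdiff_of_subset (lset_subset h3), lset_card]
    simp

lemma card_complement {m n : ℕ} {μ : YoungDiagram} (h : μ ≤ rect m n) :
    (complement m n μ).card + μ.card = m * n := by
  obtain ⟨h1, h2, h3, h4⟩ := rect_rowLen h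
  rw [card_eq_sum (complement m n μ) m (by rw [complement_rowLen]; simp), card_eq_sum μ m h1,
    ← Finset.sum_range_reflect μ.rowLen, ← Finset.sum_add_distrib]
  rw [Finset.sum_congr rfl (g := fun _ => n)]
  · simp
  · intro r hr
    have hr' := Finset.mem_range.mp hr
    have := h3 (m - 1 - r)
    rw [complement_rowLen, if_pos hr']
    omega

lemma main_formula {m n : ℕ} {μ : YoungDiagram} (h : μ ≤ rect m n) :
    (sytCount μ * sytCount (complement m n μ) : ℚ) *
      (dS (Finset.range (m + n))) = (μ.card.factorial : ℚ) * ((m * n - μ.card).factorial : ℚ) *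
      ((∏ j : Fin m, ((j : ℕ).factorial : ℚ)) * ∏ j : Fin n, ((j : ℕ).factorial : ℚ)) *
      (ssytCount μ m * ssytCount μ.transpose n) := by
  obtain ⟨h1, h2, h3, h4⟩ := rect_rowLen h
  have hsub : lset μ m ⊆ Finset.range (m + n) := lset_subset h3
  have hc0 : (complement m n μ).rowLen m = 0 := by rw [complement_rowLen]; simp
  have pl : ∀ (κ : YoungDiagram), ∏ i, ((lvec κ m i).factorial : ℚ)
      = ∏ a ∈ lset κ m, (a.factorial : ℚ) := by
    intro κ
    unfold lset
    rw [Finset.prod_image (lvec_strictMono κ m).injective.injOn]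
  have f1 := syt_dF m μ.card μ h1 rfl
  have f2 := syt_dF m _ (complement m n μ) hc0 rfl
  rw [dF_eq_dS, pl] at f1 f2
  rw [lset_complement h, Finset.prod_image (refl_inj hsub), dS_refl _ _ hsub] at f2
  have hcc : (complement m n μ).card = m * n - μ.card := by
    have := card_complement h
    omega
  rw [hcc] at f2
  have f3 := ssyt_dC m μ h1
  have f4 := ssyt_dC n μ.transpose (by rw [rowLen_transpose]; exact h2)
  have f5 := dF_eq_dC (lvec μ m)
  have f6 := dF_eq_dC (lvec μ.transpose n)
  rw [← f3, dF_eq_dS] at f5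
  rw [← f4, dF_eq_dS, dS_transpose h] at f6
  have f7 := dS_compl (m + n) (lset μ m) hsub
  have hp := dS_pos (lset μ m)
  have hF : (0 : ℚ) < (∏ a ∈ lset μ m, (a.factorial : ℚ)) *
      ∏ a ∈ lset μ m, ((m + n - 1 - a).factorial : ℚ) :=
    mul_pos (Finset.prod_pos fun a _ => by positivity) (Finset.prod_pos fun a _ => by positivity)
  generalize dS (lset μ m) = D at *
  generalize dS (Finset.range (m + n) \ lset μ m) = D' at *
  generalize dS (Finset.range (m + n)) = DN at *
  generalize ∏ a ∈ lset μ m, (a.factorial : ℚ) = F1 at *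
  generalize ∏ a ∈ lset μ m, ((m + n - 1 - a).factorial : ℚ) = F2 at *
  generalize (∏ j : Fin m, ((j : ℕ).factorial : ℚ)) = C1 at *
  generalize (∏ j : Fin n, ((j : ℕ).factorial : ℚ)) = C2 at *
  generalize (μ.card.factorial : ℚ) = P at *
  generalize ((m * n - μ.card).factorial : ℚ) = Q at *
  generalize (sytCount μ : ℚ) = x at *
  generalize (sytCount (complement m n μ) : ℚ) = y at *
  generalize (ssytCount μ m : ℚ) = u at *
  generalize (ssytCount μ.transpose n : ℚ) = v at *
  have e : P * Q * (C1 * C2) * (u * v) = P * Q * D * D' := by rw [f5, f6]; ring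
  rw [e]
  apply mul_right_cancel₀ hF.ne'
  calc x * y * DN * (F1 * F2) = (x * F1) * (y * F2) * DN := by ring
    _ = P * Q * D * (D * DN) := by rw [f1, f2]; ring
    _ = P * Q * D * D' * (F1 * F2) := by rw [← f7]; ring

end CrossId

/-- the cross identity
`dim S^λ(ℂ^m)·dim S^{λ'}(ℂ^n)·f^μ·f^{n^m/μ} = dim S^μ(ℂ^m)·dim S^{μ'}(ℂ^n)·f^λ·f^{n^m/λ}`. -/
theorem cross_identity (m n p : ℕ) (μ ν : YoungDiagram)
    (hμ : μ ≤ rect m n) (hν : ν ≤ rect m n) (hμp : μ.card = p) (hνp : ν.card = p) :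
    ssytCount μ m * ssytCount μ.transpose n * (sytCount ν * sytCount (complement m n ν))
      = ssytCount ν m * ssytCount ν.transpose n * (sytCount μ * sytCount (complement m n μ)) := by
  have a := CrossId.main_formula hμ
  have b := CrossId.main_formula hν
  rw [hμp] at a
  rw [hνp] at b
  have hN := CrossId.dS_pos (Finset.range (m + n))
  have key : ((ssytCount μ m * ssytCount μ.transpose n *
      (sytCount ν * sytCount (complement m n ν)) : ℕ) : ℚ)
      = ((ssytCount ν m * ssytCount ν.transpose n *
      (sytCount μ * sytCount (complement m n μ)) : ℕ) : ℚ) := by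
    push_cast
    apply mul_right_cancel₀ hN.ne'
    linear_combination (ssytCount μ m * ssytCount μ.transpose n : ℚ) * b
      - (ssytCount ν m * ssytCount ν.transpose n : ℚ) * a
  exact_mod_cast key
end
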